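/- arXiv:1006.5909 — 2 statements merged into one kernel-verified Lean document; each statement's English description precedes it below -/
import Mathlib

section
/- Let G be a finite subgroup of SL(2,ℂ) such that G/{±Id} is isomorphic to the alternating group A₅ (i.e., G is conjugate to the binary icosahedral group). Consider the induced action of G on the 4-dimensional space V = Sym³(ℂ²) of homogeneous degree-3 polynomials in two variables, given by (g·f)(v) = f(g⁻¹v). Then: (1) this 4-dimensional representation of G is irreducible; and (2) the induced linear group on V has no nonzero semi-invariant homogeneous polynomials of degree at most 3 (in 4 variables, i.e., as polynomial functions on V). -/
open Matrix MvPolynomial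

/-- The substitution action of `SL(2, ℂ)` on polynomials in two variables:
`(g • f)(v) = f(g⁻¹ v)`. -/
noncomputable def cubicAct (g : SpecialLinearGroup (Fin 2) ℂ)
    (f : MvPolynomial (Fin 2) ℂ) : MvPolynomial (Fin 2) ℂ :=
  MvPolynomial.aeval
    (fun i => ∑ j : Fin 2,
      MvPolynomial.C ((g⁻¹ : SpecialLinearGroup (Fin 2) ℂ) i j) * MvPolynomial.X j) f

/-- Coordinates of a binary cubic form with respect to the monomial basis
`x³, x²y, xy², y³` of `Sym³(ℂ²)`. -/
noncomputable def cubicCoords (f : MvPolynomial (Fin 2) ℂ) : Fin 4 → ℂ :=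
  fun i => MvPolynomial.coeff
    (Finsupp.single (0 : Fin 2) (3 - (i : ℕ)) + Finsupp.single (1 : Fin 2) (i : ℕ)) f

open scoped MatrixGroups commutatorElement

/-!
An element of order 5 of `A₅` lifts to some `g ∈ G` which in a suitable basis is `diag(z, z⁻¹)` with
`z ^ 2` a primitive fifth root of unity. Two elements of `SL₂` with a common eigenvector have a
unipotent commutator, which is trivial when it has finite order. Hence if neither `h` nor
`h * g * h⁻¹` commutes with `g`, then `h` maps no eigenline of `g` to an eigenline of `g`, i.e. it
has only nonzero entries in the eigenbasis of `g`. Such an `h` is found in `A₅`.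

The four monomials of degree 3 have different weights under `g`, so a nonzero invariant subspace
contains one of them; applying `h` twice produces `x ^ 3` and then every monomial.

`G` is perfect, because `A₅` is and because `-1` is the square of any lift of an involution; so
semi-invariants are invariants. Invariance under `-1` excludes odd degrees. Invariance under `g`
leaves only the quadratic forms `p c₀ c₃ + q c₁ c₂`, and evaluating at the images of `x ^ 3` and
`x ^ 2 * y` under `h` gives `p + 9 q = 0` and then `2 det(h) ^ 2 q = 0`.
-/

section LinSubst

variable {σ R : Type*} [Fintype σ] [CommRing R]

/-- The linear substitution `p(x) ↦ p(A x)` on polynomials: `X i` is replaced by the `i`-th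
coordinate of `A x`. It reverses products, so `cubicAct g` is `linSubst g⁻¹`. -/
noncomputable def linSubst (A : Matrix σ σ R) : MvPolynomial σ R →ₐ[R] MvPolynomial σ R :=
  bind₁ A.toMvPolynomial

theorem cubicAct_eq_linSubst (g : SL(2, ℂ)) (f : MvPolynomial (Fin 2) ℂ) :
    cubicAct g f = linSubst (g⁻¹ : SL(2, ℂ)).1 f := by
  simp only [cubicAct, linSubst, bind₁, C_mul_X_eq_monomial]
  rfl

@[simp]
theorem linSubst_X (A : Matrix σ σ R) (i : σ) : linSubst A (X i) = ∑ j, A i j • X j := by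
  simp [linSubst, toMvPolynomial, smul_eq_C_mul, C_mul_X_eq_monomial]

theorem linSubst_linSubst (A B : Matrix σ σ R) (p : MvPolynomial σ R) :
    linSubst B (linSubst A p) = linSubst (A * B) p := by
  simp only [linSubst, bind₁_bind₁, ← toMvPolynomial_mul]

theorem linSubst_one [DecidableEq σ] (p : MvPolynomial σ R) : linSubst 1 p = p := by
  simp [linSubst, bind₁_X_left]

theorem eval_linSubst (A : Matrix σ σ R) (v : σ → R) (p : MvPolynomial σ R) :
    eval v (linSubst A p) = eval (A *ᵥ v) p := by
  rw [linSubst, eval, eval₂Hom_bind₁]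
  exact congrArg (eval₂Hom (RingHom.id R) · p) (funext fun i => A.toMvPolynomial_eval_eq_apply i v)

theorem isHomogeneous_linSubst (A : Matrix σ σ R) {p : MvPolynomial σ R} {n : ℕ}
    (hp : p.IsHomogeneous n) : (linSubst A p).IsHomogeneous n := by
  simpa only [one_mul, linSubst, bind₁] using hp.aeval _ A.toMvPolynomial_isHomogeneous

theorem coeff_linSubst_diagonal [DecidableEq σ] (d : σ → R) (m : σ →₀ ℕ) (p : MvPolynomial σ R) :
    coeff m (linSubst (diagonal d) p) = (∏ i, d i ^ m i) * coeff m p := by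
  have linSubst_monomial (k : σ →₀ ℕ) (a : R) :
      linSubst (diagonal d) (monomial k a) = monomial k ((∏ i, d i ^ k i) * a) := by
    have linSubst_var (i : σ) : linSubst (diagonal d) (X i) = C (d i) * X i := by
      simp [diagonal_apply, smul_eq_C_mul]
    simp only [monomial_eq, Finsupp.prod_fintype, pow_zero, implies_true, map_mul, map_prod,
      map_pow, algHom_C, algebraMap_eq, linSubst_var, mul_pow, Finset.prod_mul_distrib]
    ring
  induction p using MvPolynomial.induction_on' with
  | monomial k a =>
    rw [linSubst_monomial, coeff_monomial, coeff_monomial]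
    split_ifs with h
    · rw [h]
    · rw [mul_zero]
  | add p q hp hq => rw [map_add, coeff_add, coeff_add, hp, hq, mul_add]

theorem linSubst_neg_one [DecidableEq σ] {p : MvPolynomial σ R} {n : ℕ} (hp : p.IsHomogeneous n) :
    linSubst (-1) p = (-1 : R) ^ n • p := by
  ext m
  rw [← diagonal_one, diagonal_neg, coeff_linSubst_diagonal, coeff_smul, smul_eq_mul]
  by_cases hm : m.degree = n
  · rw [Finset.prod_pow_eq_pow_sum, ← Finsupp.degree_eq_sum, hm]
  · rw [hp.coeff_eq_zero hm, mul_zero, mul_zero]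

end LinSubst

section Irreducibility

variable {ι σ K V : Type*} [Field K]

theorem mem_of_sum_eigenvectors_mem [AddCommGroup V] [Module K V] {L : Module.End K V}
    {W : Submodule K V} (hLW : ∀ w ∈ W, L w ∈ W) {μ : ι → K} {s : Finset ι} (hμ : Set.InjOn μ s)
    {v : ι → V} (hv : ∀ i ∈ s, L (v i) = μ i • v i) (hsum : ∑ i ∈ s, v i ∈ W) :
    ∀ i ∈ s, v i ∈ W := by
  classical
  induction s using Finset.induction_on generalizing v with
  | empty => simp
  | insert a s ha ih =>
    rw [Finset.coe_insert, Set.injOn_insert (by simpa using ha)] at hμ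
    rw [Finset.forall_mem_insert] at hv
    have hdiff : ∑ i ∈ s, (μ i - μ a) • v i ∈ W := by
      convert W.sub_mem (hLW _ hsum) (W.smul_mem (μ a) hsum) using 1
      rw [map_sum, Finset.smul_sum, ← Finset.sum_sub_distrib, Finset.sum_insert ha, hv.1, sub_self,
        zero_add]
      exact Finset.sum_congr rfl fun i hi => by rw [hv.2 i hi, sub_smul]
    have hs : ∀ i ∈ s, v i ∈ W := fun i hi =>
      (W.smul_mem_iff (sub_ne_zero.2 fun h => hμ.2 ⟨i, hi, h⟩)).1 <|
        ih hμ.1 (fun j hj => by rw [map_smul, hv.2 j hj, smul_comm]) hdiff i hi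
    rw [Finset.sum_insert ha] at hsum
    exact Finset.forall_mem_insert _ _ _ |>.2
      ⟨(W.add_mem_iff_left (W.sum_mem hs)).1 hsum, hs⟩

theorem coeff_single_eq_eval [DecidableEq σ] {n : ℕ} {f : MvPolynomial σ K} (i : σ)
    (hf : f.IsHomogeneous n) :
    coeff (Finsupp.single i n) f = eval (Pi.single i 1) f := by
  rw [eval_eq, Finset.sum_eq_single (Finsupp.single i n)]
  · rw [Finset.prod_eq_one, mul_one]
    intro j hj
    rw [Finset.mem_singleton.1 (Finsupp.support_single_subset hj), Pi.single_eq_same, one_pow]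
  · intro m hm hne
    obtain ⟨j, hj, hji⟩ : ∃ j ∈ m.support, j ≠ i := by
      by_contra! h
      obtain ⟨k, rfl⟩ := Finsupp.support_subset_singleton'.1 fun j hj => by simpa using h j hj
      exact mem_support_iff.1 hm (hf.coeff_eq_zero fun hk => hne (by simp [← hk]))
    rw [Finset.prod_eq_zero hj, mul_zero]
    rw [Pi.single_eq_of_ne hji, zero_pow (Finsupp.mem_support_iff.1 hj)]
  · intro h
    rw [notMem_support_iff.1 h, zero_mul]

variable [Fintype σ] [DecidableEq σ] {W : Submodule K (MvPolynomial σ K)} {d : σ → K} {n : ℕ}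
  {f : MvPolynomial σ K}

theorem monomial_mem_of_coeff_ne_zero (hdW : ∀ p ∈ W, linSubst (diagonal d) p ∈ W)
    (hd : Set.InjOn (fun m : σ →₀ ℕ => ∏ i, d i ^ m i) {m | m.degree = n})
    (hf : f.IsHomogeneous n) (hfW : f ∈ W) {m : σ →₀ ℕ} (hm : coeff m f ≠ 0) :
    monomial m 1 ∈ W := by
  have hmem : monomial m (coeff m f) ∈ W := by
    refine mem_of_sum_eigenvectors_mem (L := (linSubst (diagonal d)).toLinearMap)
      (s := f.support) (v := fun k => monomial k (coeff k f)) hdW (hd.mono fun k hk => ?_)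
      (fun k _ => ?_) ?_ m (mem_support_iff.2 hm)
    · by_contra h
      exact mem_support_iff.1 hk (hf.coeff_eq_zero h)
    · ext l
      rw [AlgHom.toLinearMap_apply, coeff_linSubst_diagonal, coeff_smul, coeff_monomial]
      split_ifs with h <;> simp [h]
    · rwa [support_sum_monomial_coeff]
  rwa [← mul_one (coeff m f), ← smul_eq_mul, ← smul_monomial, W.smul_mem_iff hm] at hmem

theorem homogeneousSubmodule_le_of_invariant [CharZero K]
    (hdW : ∀ p ∈ W, linSubst (diagonal d) p ∈ W)
    (hd : Set.InjOn (fun m : σ →₀ ℕ => ∏ i, d i ^ m i) {m | m.degree = n})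
    {A : Matrix σ σ K} (hAW : ∀ p ∈ W, linSubst A p ∈ W) {i : σ} (hrow : ∀ j, A i j ≠ 0)
    (hcol : ∀ j, A j i ≠ 0) (hf : f.IsHomogeneous n) (hfW : f ∈ W) (hf0 : f ≠ 0) :
    homogeneousSubmodule σ K n ≤ W := by
  have hpow : X i ^ n ∈ W := by
    obtain ⟨m, hm⟩ := ne_zero_iff.1 hf0
    have hdeg : m.degree = n := by
      by_contra h
      exact hm (hf.coeff_eq_zero h)
    have hmono : (monomial m (1 : K)).IsHomogeneous n := isHomogeneous_monomial _ hdeg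
    rw [X_pow_eq_monomial]
    refine monomial_mem_of_coeff_ne_zero hdW hd (isHomogeneous_linSubst A hmono)
      (hAW _ (monomial_mem_of_coeff_ne_zero hdW hd hf hfW hm)) ?_
    rw [coeff_single_eq_eval i (isHomogeneous_linSubst A hmono), eval_linSubst, eval_monomial,
      mulVec_single_one, one_mul, Finsupp.prod_fintype _ _ fun _ => pow_zero _]
    exact Finset.prod_ne_zero_iff.2 fun j _ => pow_ne_zero _ (hcol j)
  intro p hp
  rw [← support_sum_monomial_coeff p]
  refine W.sum_mem fun m hm => ?_
  have hdeg : m.degree = n := by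
    by_contra h
    exact mem_support_iff.1 hm (IsHomogeneous.coeff_eq_zero hp h)
  rw [← mul_one (coeff m p), ← smul_eq_mul, ← smul_monomial]
  refine W.smul_mem _ (monomial_mem_of_coeff_ne_zero hdW hd
    (isHomogeneous_linSubst A (isHomogeneous_X_pow i n)) (hAW _ hpow) ?_)
  rw [map_pow, linSubst_X, coeff_linearCombination_X_pow_of_fintype (A i),
    if_pos (show m.sum (fun _ k => k) = n from hdeg), Finsupp.prod_fintype _ _ fun _ => pow_zero _]
  exact mul_ne_zero (Nat.cast_ne_zero.2 (Nat.multinomial_pos _ _).ne')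
    (Finset.prod_ne_zero_iff.2 fun j _ => pow_ne_zero _ (hrow j))

theorem homogeneousSubmodule_le_of_conj_invariant [CharZero K] {M x y : SpecialLinearGroup σ K}
    (hxW : ∀ p ∈ W, linSubst x.1 p ∈ W) (hyW : ∀ p ∈ W, linSubst y.1 p ∈ W)
    (hx : (M * x * M⁻¹).1 = diagonal d)
    (hd : Set.InjOn (fun m : σ →₀ ℕ => ∏ i, d i ^ m i) {m | m.degree = n})
    {i : σ} (hrow : ∀ j, (M * y * M⁻¹) i j ≠ 0) (hcol : ∀ j, (M * y * M⁻¹) j i ≠ 0)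
    (hf : f.IsHomogeneous n) (hfW : f ∈ W) (hf0 : f ≠ 0) :
    homogeneousSubmodule σ K n ≤ W := by
  have linSubst_inv_cancel (p : MvPolynomial σ K) : linSubst M.1 (linSubst (M⁻¹).1 p) = p := by
    rw [linSubst_linSubst, ← Matrix.SpecialLinearGroup.coe_mul, inv_mul_cancel,
      Matrix.SpecialLinearGroup.coe_one, linSubst_one]
  have conj_invariant {g : SpecialLinearGroup σ K} (hg : ∀ p ∈ W, linSubst g.1 p ∈ W) :
      ∀ p ∈ W.comap (linSubst M.1).toLinearMap,
        linSubst (M * g * M⁻¹).1 p ∈ W.comap (linSubst M.1).toLinearMap := by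
    intro p hp
    have hconj : linSubst M.1 (linSubst (M * g * M⁻¹).1 p) = linSubst g.1 (linSubst M.1 p) := by
      simp only [linSubst_linSubst, ← Matrix.SpecialLinearGroup.coe_mul, inv_mul_cancel_right]
    simpa only [Submodule.mem_comap, AlgHom.toLinearMap_apply, hconj] using hg _ hp
  have hle := homogeneousSubmodule_le_of_invariant (hx ▸ conj_invariant hxW) hd
    (conj_invariant hyW) hrow hcol (isHomogeneous_linSubst (M⁻¹).1 hf)
    (by rwa [Submodule.mem_comap, AlgHom.toLinearMap_apply, linSubst_inv_cancel])
    (fun h => hf0 (by rw [← linSubst_inv_cancel f, h, map_zero]))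
  intro p hp
  simpa only [Submodule.mem_comap, AlgHom.toLinearMap_apply, linSubst_inv_cancel] using
    hle (isHomogeneous_linSubst (M⁻¹).1 hp)

theorem injOn_prod_pow_of_isPrimitiveRoot {z : K} {k : ℕ} (hz : IsPrimitiveRoot (z ^ 2) k)
    (hn : n < k) :
    Set.InjOn (fun m : Fin 2 →₀ ℕ => ∏ i, ![z, z⁻¹] i ^ m i) {m | m.degree = n} := by
  intro a ha b hb hab
  have hz0 : z ≠ 0 := by
    rintro rfl
    simpa using hz.ne_zero (by lia)
  have mul_eq_pow {m : Fin 2 →₀ ℕ} (hm : m 0 + m 1 = n) :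
      z ^ n * ∏ i, ![z, z⁻¹] i ^ m i = (z ^ 2) ^ m 0 := by
    rw [Fin.prod_univ_two, ← hm]
    simp only [cons_val_zero, cons_val_one]
    rw [pow_add, inv_pow, ← pow_mul', pow_mul]
    field_simp
  simp only [Set.mem_ofPred_eq, Finsupp.degree_eq_sum, Fin.sum_univ_two] at ha hb
  have h0 : a 0 = b 0 := hz.pow_inj (by lia) (by lia) <| by
    rw [← mul_eq_pow ha, ← mul_eq_pow hb]
    exact congrArg (z ^ n * ·) hab
  ext i
  fin_cases i
  · exact h0
  · simp only [Fin.mk_one]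
    lia

end Irreducibility

section SpecialLinearGroup

variable {K : Type*} [Field K]

theorem eq_one_of_isOfFinOrder_of_mulVec_eq [CharZero K] {g : SL(2, K)} (hg : IsOfFinOrder g)
    {v : Fin 2 → K} (hv : v ≠ 0) (hgv : g.1 *ᵥ v = v) : g = 1 := by
  have hdet : (g.1 - 1).det = 0 :=
    exists_mulVec_eq_zero_iff.1 ⟨v, hv, by rw [sub_mulVec, hgv, one_mulVec, sub_self]⟩
  have htrace : g.1.trace = 2 := by
    rw [det_fin_two] at hdet
    simp only [Matrix.sub_apply, one_apply, Fin.isValue, zero_ne_one, one_ne_zero, if_true,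
      if_false] at hdet
    rw [trace_fin_two]
    linear_combination (det_fin_two g.1).symm.trans g.2 - hdet
  have hdiscr : g.1.discr = 0 := by
    rw [discr_fin_two, htrace, g.2]
    ring
  obtain ⟨a, ha⟩ : g.1 ∈ Set.range (scalar (Fin 2)) := by
    by_contra hscalar
    obtain ⟨n, hn, hgn⟩ := isOfFinOrder_iff_pow_eq_one.1 hg
    have hparabolic : (Matrix.SpecialLinearGroup.toGL g).IsParabolic := ⟨hscalar, hdiscr⟩
    refine (hparabolic.pow hn.ne').1 ⟨1, ?_⟩
    rw [← map_pow, hgn]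
    simp
  obtain ⟨i, hi⟩ := Function.ne_iff.1 hv
  have ha1 : a = 1 := by
    rw [← ha, scalar_apply, ← smul_one_eq_diagonal, smul_mulVec, one_mulVec] at hgv
    exact mul_right_cancel₀ hi (by simpa using congrFun hgv i)
  exact Subtype.ext (by rw [← ha, ha1, map_one, Matrix.SpecialLinearGroup.coe_one])

theorem commute_of_common_eigenvector [CharZero K] {x y : SL(2, K)} (hxy : IsOfFinOrder ⁅x, y⁆)
    {v : Fin 2 → K} (hv : v ≠ 0) {α β : K} (hx : x.1 *ᵥ v = α • v) (hy : y.1 *ᵥ v = β • v) :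
    Commute x y := by
  refine commutatorElement_eq_one_iff_commute.1
    (eq_one_of_isOfFinOrder_of_mulVec_eq hxy (v := (y * x).1 *ᵥ v) ?_ ?_)
  · exact fun h => hv (eq_zero_of_mulVec_eq_zero (by simp) h)
  · have hcomm : ⁅x, y⁆ * (y * x) = x * y := by rw [commutatorElement_def]; group
    rw [mulVec_mulVec, ← Matrix.SpecialLinearGroup.coe_mul, hcomm,
      Matrix.SpecialLinearGroup.coe_mul, Matrix.SpecialLinearGroup.coe_mul, ← mulVec_mulVec,
      ← mulVec_mulVec, hx, hy, mulVec_smul, mulVec_smul, hx, hy, smul_comm]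

theorem apply_ne_zero_of_not_commute [CharZero K] {x y : SL(2, K)} {d : Fin 2 → K}
    (hx : x.1 = diagonal d) (hxy : ¬ Commute x y) (hxy' : ¬ Commute x (y * x * y⁻¹))
    (hfin : IsOfFinOrder ⁅x, y⁆) (hfin' : IsOfFinOrder ⁅x, y * x * y⁻¹⁆) (i j : Fin 2) :
    y i j ≠ 0 := by
  have mulVec_x (i : Fin 2) (c : K) : x.1 *ᵥ Pi.single i c = d i • Pi.single i c := by
    rw [hx, diagonal_mulVec_single, ← Pi.single_smul, smul_eq_mul]
  -- If `y i j = 0`, then `y` maps `e j` into a coordinate line, which is an eigenline of `x`: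
  -- either `e j` itself, a common eigenvector of `x` and `y`, or the other one, a common
  -- eigenvector of `x` and `y * x * y⁻¹`.
  intro hij
  obtain ⟨k, c, hk⟩ : ∃ k c, y.1 *ᵥ Pi.single j 1 = Pi.single k c := by
    refine ⟨i + 1, y (i + 1) j, funext fun l => ?_⟩
    rw [mulVec_single_one]
    fin_cases i <;> fin_cases l <;> simp_all
  have hc : (Pi.single k c : Fin 2 → K) ≠ 0 := fun h =>
    (by simp : (Pi.single j 1 : Fin 2 → K) ≠ 0) <|
      eq_zero_of_mulVec_eq_zero (M := y.1) (by simp) (hk.trans h)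
  by_cases hjk : j = k
  · subst hjk
    refine hxy (commute_of_common_eigenvector hfin (by simp) (mulVec_x j 1) (β := c) ?_)
    rw [hk, ← Pi.single_smul, smul_eq_mul, mul_one]
  · refine hxy' (commute_of_common_eigenvector hfin' hc (mulVec_x k c) (β := d j) ?_)
    rw [← hk, mulVec_mulVec, ← Matrix.SpecialLinearGroup.coe_mul, inv_mul_cancel_right,
      Matrix.SpecialLinearGroup.coe_mul, ← mulVec_mulVec, mulVec_x, mulVec_smul]

end SpecialLinearGroup

section Diagonalization

variable {K : Type*} [Field K]

theorem det_sub_smul_one (g : SL(2, K)) (t : K) :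
    (g.1 - t • 1).det = t ^ 2 - g.1.trace * t + 1 := by
  have hg := (det_fin_two g.1).symm.trans g.2
  rw [det_fin_two, trace_fin_two]
  simp only [Matrix.sub_apply, Matrix.smul_apply, one_apply, Fin.isValue, zero_ne_one, one_ne_zero,
    if_true, if_false, smul_eq_mul]
  linear_combination hg

theorem exists_mulVec_eq_inv_smul {g : SL(2, K)} {v : Fin 2 → K} (hv : v ≠ 0) {z : K}
    (hgv : g.1 *ᵥ v = z • v) : ∃ w ≠ 0, g.1 *ᵥ w = z⁻¹ • w := by
  have hroot : z ^ 2 - g.1.trace * z + 1 = 0 := by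
    rw [← det_sub_smul_one, ← exists_mulVec_eq_zero_iff]
    exact ⟨v, hv, by rw [sub_mulVec, smul_mulVec, one_mulVec, hgv, sub_self]⟩
  have hz0 : z ≠ 0 := by
    rintro rfl
    simp at hroot
  have hroot' : (g.1 - z⁻¹ • 1).det = 0 := by
    rw [det_sub_smul_one]
    field_simp
    linear_combination hroot
  obtain ⟨w, hw, h⟩ := exists_mulVec_eq_zero_iff.2 hroot'
  exact ⟨w, hw, by rwa [sub_mulVec, smul_mulVec, one_mulVec, sub_eq_zero] at h⟩

theorem exists_conj_eq_diagonal_of_mulVec_eq_smul {g : SL(2, K)} {v : Fin 2 → K} (hv : v ≠ 0)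
    {z : K} (hgv : g.1 *ᵥ v = z • v) (hz : z ^ 2 ≠ 1) :
    ∃ M : SL(2, K), (M * g * M⁻¹).1 = diagonal ![z, z⁻¹] := by
  have hz0 : z ≠ 0 := by
    rintro rfl
    exact hv (eq_zero_of_mulVec_eq_zero (M := g.1) (by simp) (by rw [hgv, zero_smul]))
  obtain ⟨w, hw, hgw⟩ := exists_mulVec_eq_inv_smul hv hgv
  have hdet : v 0 * w 1 - v 1 * w 0 ≠ 0 := by
    have hinj : Function.Injective ![z, z⁻¹] := by
      have : z ≠ z⁻¹ := fun h => hz (by rw [sq, mul_eq_one_iff_eq_inv₀ hz0, ← h])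
      simp [Function.Injective, Fin.forall_fin_two, this, this.symm]
    have hindep : LinearIndependent K ![v, w] :=
      Module.End.eigenvectors_linearIndependent' g.1.toLin' _ hinj _ <| Fin.forall_fin_two.2
        ⟨Module.End.hasEigenvector_iff.2 ⟨Module.End.mem_eigenspace_iff.2 hgv, hv⟩,
          Module.End.hasEigenvector_iff.2 ⟨Module.End.mem_eigenspace_iff.2 hgw, hw⟩⟩
    simpa [isUnit_iff_isUnit_det, det_fin_two] using
      linearIndependent_rows_iff_isUnit (A := of ![v, w]) |>.1 hindep
  set δ := v 0 * w 1 - v 1 * w 0 with hδ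
  let P : SL(2, K) := ⟨!![v 0, δ⁻¹ * w 0; v 1, δ⁻¹ * w 1], by
    rw [det_fin_two_of]
    field_simp
    linear_combination -hδ⟩
  have hgP : g.1 * P.1 = P.1 * diagonal ![z, z⁻¹] := by
    ext i j
    have hvi : g i 0 * v 0 + g i 1 * v 1 = z * v i := by
      simpa [mulVec, dotProduct] using congrFun hgv i
    have hwi : g i 0 * w 0 + g i 1 * w 1 = z⁻¹ * w i := by
      simpa [mulVec, dotProduct] using congrFun hgw i
    rw [mul_diagonal, Matrix.mul_apply, Fin.sum_univ_two]
    fin_cases i <;> fin_cases j <;> simp [P] at hvi hwi ⊢ <;> grind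
  refine ⟨P⁻¹, ?_⟩
  rw [inv_inv, mul_assoc, Matrix.SpecialLinearGroup.coe_mul, Matrix.SpecialLinearGroup.coe_mul, hgP,
    ← mul_assoc, ← Matrix.SpecialLinearGroup.coe_mul, inv_mul_cancel,
    Matrix.SpecialLinearGroup.coe_one, one_mul]

theorem exists_conj_eq_diagonal_of_isOfFinOrder [IsAlgClosed K] [CharZero K] {g : SL(2, K)}
    (hg : IsOfFinOrder g) (hg1 : g ≠ 1) (hg1' : g ≠ -1) :
    ∃ (M : SL(2, K)) (z : K), z ^ 2 ≠ 1 ∧ (M * g * M⁻¹).1 = diagonal ![z, z⁻¹] := by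
  obtain ⟨z, hz⟩ := Module.End.exists_eigenvalue g.1.toLin'
  obtain ⟨v, hv⟩ := hz.exists_hasEigenvector
  have hgv : g.1 *ᵥ v = z • v := hv.apply_eq_smul
  have hz2 : z ^ 2 ≠ 1 := by
    intro h
    obtain rfl | rfl := sq_eq_one_iff.1 h
    · exact hg1 (eq_one_of_isOfFinOrder_of_mulVec_eq hg hv.2 (by rw [hgv, one_smul]))
    · have hneg : IsOfFinOrder (-g) := by
        rw [← neg_one_mul]
        exact (Commute.neg_one_left g).isOfFinOrder_mul
          (isOfFinOrder_iff_pow_eq_one.2 ⟨2, two_pos, neg_one_sq⟩) hg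
      refine hg1' (neg_eq_iff_eq_neg.1 (eq_one_of_isOfFinOrder_of_mulVec_eq hneg hv.2 ?_))
      rw [Matrix.SpecialLinearGroup.coe_neg, neg_mulVec, hgv, neg_smul, one_smul, neg_neg]
  obtain ⟨M, hM⟩ := exists_conj_eq_diagonal_of_mulVec_eq_smul hv.2 hgv hz2
  exact ⟨M, z, hz2, hM⟩

theorem pow_eq_one_of_conj_eq_diagonal {g M : SL(2, K)} {z : K}
    (h : (M * g * M⁻¹).1 = diagonal ![z, z⁻¹]) {n : ℕ} (hg : g ^ n = 1) : z ^ n = 1 := by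
  have hconj : (M * g * M⁻¹) ^ n = 1 := by rw [conj_pow, hg, mul_one, mul_inv_cancel]
  have hdiag : diagonal (![z, z⁻¹] ^ n) = 1 := by
    rw [← diagonal_pow, ← h, ← Matrix.SpecialLinearGroup.coe_pow, hconj,
      Matrix.SpecialLinearGroup.coe_one]
  simpa using congrFun₂ hdiag 0 0

theorem eq_one_or_eq_neg_one_of_sq_eq_one [IsAlgClosed K] [CharZero K] {g : SL(2, K)}
    (hg : g ^ 2 = 1) : g = 1 ∨ g = -1 := by
  by_contra! hne
  obtain ⟨M, z, hz, hM⟩ := exists_conj_eq_diagonal_of_isOfFinOrder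
    (isOfFinOrder_iff_pow_eq_one.2 ⟨2, two_pos, hg⟩) hne.1 hne.2
  exact hz (pow_eq_one_of_conj_eq_diagonal hM hg)

end Diagonalization

theorem exists_orderOf_eq_five_not_commute :
    ∃ σ τ : alternatingGroup (Fin 5), orderOf σ = 5 ∧ ¬ Commute σ τ ∧
      ¬ Commute σ (τ * σ * τ⁻¹) := by
  have : Fact (Nat.Prime 5) := ⟨Nat.prime_five⟩
  refine ⟨⟨finRotate 5, by rw [Equiv.Perm.mem_alternatingGroup]; decide⟩,
    ⟨c[0, 1, 2], by rw [Equiv.Perm.mem_alternatingGroup]; decide⟩,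
    orderOf_eq_prime (by decide) (by decide), ?_, ?_⟩ <;>
  · rw [commute_iff_eq]
    decide

theorem map_commutator_eq_top {H : Type*} [Group H] {φ : H →* alternatingGroup (Fin 5)}
    (hφ : Function.Surjective φ) : (commutator H).map φ = ⊤ := by
  rw [map_commutator_eq, MonoidHom.range_eq_top.2 hφ, ← commutator_def]
  exact commutator_alternatingGroup_eq_top (by simp)

section BinaryIcosahedral

variable {K : Type*} [Field K] [IsAlgClosed K] [CharZero K] {G : Subgroup SL(2, K)}
  {φ : G →* alternatingGroup (Fin 5)} (hφ : Function.Surjective φ)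
  (hker : ∀ g : G, φ g = 1 ↔ (g : SL(2, K)) = 1 ∨ (g : SL(2, K)) = -1)
include hφ hker

theorem exists_conj_eq_diagonal_and_apply_ne_zero (hG : IsMulTorsion G) :
    ∃ k ∈ G, ∃ g ∈ G, ∃ (M : SL(2, K)) (z : K), IsPrimitiveRoot (z ^ 2) 5 ∧
      (M * k * M⁻¹).1 = diagonal ![z, z⁻¹] ∧ ∀ i j, (M * g * M⁻¹) i j ≠ 0 := by
  obtain ⟨σ, τ, hσ, hστ, hστ'⟩ := exists_orderOf_eq_five_not_commute
  obtain ⟨k, rfl⟩ := hφ σ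
  obtain ⟨g, rfl⟩ := hφ τ
  have hk1 : φ k ≠ 1 := fun h => by simp [h] at hσ
  have hk10 : (k : SL(2, K)) ^ 10 = 1 := by
    have hk5 : φ (k ^ 5) = 1 := by rw [map_pow, orderOf_dvd_iff_pow_eq_one.1 hσ.dvd]
    rw [show 10 = 5 * 2 by rfl, pow_mul, ← Subgroup.coe_pow]
    obtain h | h := (hker _).1 hk5 <;> simp [h]
  have hne : (k : SL(2, K)) ≠ 1 ∧ (k : SL(2, K)) ≠ -1 := by rwa [← not_or, ← hker]
  obtain ⟨M, z, hz, hM⟩ := exists_conj_eq_diagonal_of_isOfFinOrder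
    (Submonoid.isOfFinOrder_coe.2 (hG k)) hne.1 hne.2
  have hroot : IsPrimitiveRoot (z ^ 2) 5 := by
    have : Fact (Nat.Prime 5) := ⟨Nat.prime_five⟩
    refine IsPrimitiveRoot.iff_orderOf.2 (orderOf_eq_prime ?_ hz)
    rw [← pow_mul]
    exact pow_eq_one_of_conj_eq_diagonal hM hk10
  let conj : G →* SL(2, K) := (MulAut.conj M).toMonoidHom.comp G.subtype
  have conj_injective : Function.Injective conj :=
    (MulAut.conj M).injective.comp G.subtype_injective
  have not_commute_conj {x : G} (hx : ¬ Commute (φ k) (φ x)) : ¬ Commute (conj k) (conj x) :=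
    fun h => hx ((h.of_map conj_injective).map φ)
  have isOfFinOrder_conj (x : G) : IsOfFinOrder ⁅conj k, conj x⁆ := by
    rw [← map_commutatorElement]
    exact conj.isOfFinOrder (hG _)
  have hconj : conj (g * k * g⁻¹) = conj g * conj k * (conj g)⁻¹ := by
    rw [map_mul, map_mul, map_inv]
  exact ⟨k, k.2, g, g.2, M, z, hroot, hM,
    apply_ne_zero_of_not_commute (x := conj k) (y := conj g) hM (not_commute_conj hστ)
      (hconj ▸ not_commute_conj (by rwa [map_mul, map_mul, map_inv]))
      (isOfFinOrder_conj g) (hconj ▸ isOfFinOrder_conj (g * k * g⁻¹))⟩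

theorem neg_one_mem_commutator : ∃ x ∈ commutator G, (x : SL(2, K)) = -1 := by
  obtain ⟨s, hs1, hs2⟩ : ∃ s : alternatingGroup (Fin 5), s ≠ 1 ∧ s ^ 2 = 1 :=
    ⟨⟨c[0, 1] * c[2, 3], by rw [Equiv.Perm.mem_alternatingGroup]; decide⟩, by decide, by decide⟩
  obtain ⟨x, hx, rfl⟩ : s ∈ (commutator G).map φ := map_commutator_eq_top hφ ▸ Subgroup.mem_top s
  refine ⟨x ^ 2, pow_mem hx 2, ((hker _).1 (by rw [map_pow, hs2])).resolve_left fun h => hs1 ?_⟩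
  exact (hker x).2 (eq_one_or_eq_neg_one_of_sq_eq_one h)

theorem commutator_eq_top : commutator G = ⊤ := by
  obtain ⟨c, hc, hc1⟩ := neg_one_mem_commutator hφ hker
  have hker_le : φ.ker ≤ commutator G := fun x hx => by
    obtain h | h := (hker x).1 hx
    · exact (show x = 1 from Subtype.ext h) ▸ one_mem _
    · exact (show x = c from Subtype.ext (h.trans hc1.symm)) ▸ hc
  rw [← Subgroup.comap_map_eq_self hker_le, map_commutator_eq_top hφ, Subgroup.comap_top]

end BinaryIcosahedral

section CubicForms

/-- The exponent of the monomial `x ^ (3 - j) * y ^ j`, the `j`-th element of the monomial basis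
used by `cubicCoords`. -/
noncomputable def cubicExponent (j : Fin 4) : Fin 2 →₀ ℕ :=
  Finsupp.single 0 (3 - (j : ℕ)) + Finsupp.single 1 (j : ℕ)

theorem cubicExponent_injective : Function.Injective cubicExponent := fun i j h =>
  Fin.ext (by simpa [cubicExponent] using DFunLike.congr_fun h 1)

theorem degree_cubicExponent (j : Fin 4) : (cubicExponent j).degree = 3 := by
  rw [cubicExponent, map_add, Finsupp.degree_single, Finsupp.degree_single]
  lia

theorem exists_cubicExponent_eq {m : Fin 2 →₀ ℕ} (hm : m.degree = 3) :
    ∃ j, cubicExponent j = m := by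
  rw [Finsupp.degree_eq_sum, Fin.sum_univ_two] at hm
  refine ⟨⟨m 1, by lia⟩, Finsupp.ext fun i => ?_⟩
  fin_cases i <;> simp [cubicExponent]
  lia

theorem monomial_cubicExponent (j : Fin 4) (a : ℂ) :
    monomial (cubicExponent j) a = C a * (X 0 ^ (3 - (j : ℕ)) * X 1 ^ (j : ℕ)) := by
  rw [X_pow_eq_monomial, X_pow_eq_monomial, monomial_mul, C_mul_monomial, mul_one, mul_one]
  rfl

theorem isHomogeneous_monomial_cubicExponent (j : Fin 4) (a : ℂ) :
    (monomial (cubicExponent j) a).IsHomogeneous 3 :=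
  isHomogeneous_monomial a (degree_cubicExponent j)

theorem cubicCoords_sum_monomial (c : Fin 4 → ℂ) :
    cubicCoords (∑ j, monomial (cubicExponent j) (c j)) = c := by
  ext i
  rw [cubicCoords, ← cubicExponent, coeff_sum]
  simp [coeff_monomial, cubicExponent_injective.eq_iff]

theorem cubicCoords_monomial (j : Fin 4) :
    cubicCoords (monomial (cubicExponent j) 1) = Pi.single j 1 := by
  ext i
  rw [cubicCoords, ← cubicExponent, coeff_monomial, Pi.single_apply]
  exact if_congr (cubicExponent_injective.eq_iff.trans eq_comm) rfl rfl

theorem sum_monomial_cubicCoords {f : MvPolynomial (Fin 2) ℂ} (hf : f.IsHomogeneous 3) :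
    ∑ j, monomial (cubicExponent j) (cubicCoords f j) = f := by
  ext m
  simp only [coeff_sum, coeff_monomial]
  by_cases hm : m.degree = 3
  · obtain ⟨j, rfl⟩ := exists_cubicExponent_eq hm
    simp only [cubicExponent_injective.eq_iff, Finset.sum_ite_eq', Finset.mem_univ, if_true]
    rfl
  · rw [hf.coeff_eq_zero hm]
    exact Finset.sum_eq_zero fun j _ => if_neg fun h : cubicExponent j = m =>
      hm (h ▸ degree_cubicExponent j)

/-- The symmetric cube of a `2 × 2` matrix: the matrix of `linSubst A` on binary cubic forms in
the coordinates `cubicCoords`. Like `linSubst`, it reverses products. -/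
noncomputable def symCube (A : Matrix (Fin 2) (Fin 2) ℂ) : Matrix (Fin 4) (Fin 4) ℂ :=
  of fun i j => cubicCoords (linSubst A (monomial (cubicExponent j) 1)) i

theorem symCube_mulVec_cubicCoords (A : Matrix (Fin 2) (Fin 2) ℂ) {f : MvPolynomial (Fin 2) ℂ}
    (hf : f.IsHomogeneous 3) : symCube A *ᵥ cubicCoords f = cubicCoords (linSubst A f) := by
  have monomial_eq_smul (j : Fin 4) : monomial (cubicExponent j) (cubicCoords f j) =
      cubicCoords f j • monomial (cubicExponent j) 1 := by
    rw [smul_monomial, smul_eq_mul, mul_one]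
  conv_rhs => rw [← sum_monomial_cubicCoords hf]
  ext i
  simp only [mulVec, dotProduct, symCube, of_apply, monomial_eq_smul, map_sum, map_smul]
  simp only [cubicCoords, coeff_sum, coeff_smul, smul_eq_mul, mul_comm]

theorem symCube_mul (A B : Matrix (Fin 2) (Fin 2) ℂ) :
    symCube (A * B) = symCube B * symCube A := by
  refine ext_of_mulVec_single fun j => ?_
  have hj := isHomogeneous_monomial_cubicExponent j 1
  rw [← mulVec_mulVec, ← cubicCoords_monomial, symCube_mulVec_cubicCoords _ hj,
    symCube_mulVec_cubicCoords _ hj, symCube_mulVec_cubicCoords _ (isHomogeneous_linSubst A hj),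
    linSubst_linSubst]

theorem symCube_diagonal (d : Fin 2 → ℂ) :
    symCube (diagonal d) = diagonal fun i : Fin 4 => d 0 ^ (3 - (i : ℕ)) * d 1 ^ (i : ℕ) := by
  ext i j
  rw [symCube, of_apply, cubicCoords, coeff_linSubst_diagonal, ← cubicExponent, coeff_monomial,
    diagonal_apply, Fin.prod_univ_two, mul_ite, mul_one, mul_zero]
  refine if_congr (cubicExponent_injective.eq_iff.trans eq_comm) ?_ rfl
  simp [cubicExponent]

theorem symCube_one : symCube 1 = 1 := by
  rw [← diagonal_one, symCube_diagonal, ← diagonal_one]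
  simp

theorem symCube_neg_one : symCube (-1) = -1 := by
  rw [← diagonal_one, diagonal_neg, symCube_diagonal, ← diagonal_one, diagonal_neg]
  congr! 2 with i
  fin_cases i <;> norm_num

theorem symCube_mulVec_single_zero (A : Matrix (Fin 2) (Fin 2) ℂ) :
    symCube A *ᵥ Pi.single 0 1 =
      ![A 0 0 ^ 3, 3 * A 0 0 ^ 2 * A 0 1, 3 * A 0 0 * A 0 1 ^ 2, A 0 1 ^ 3] := by
  rw [← cubicCoords_monomial,
    symCube_mulVec_cubicCoords _ (isHomogeneous_monomial_cubicExponent 0 1)]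
  refine .trans (congrArg cubicCoords ?_) (cubicCoords_sum_monomial _)
  simp only [Fin.sum_univ_four, monomial_cubicExponent, map_mul, map_pow, map_ofNat, linSubst_X,
    Fin.sum_univ_two, smul_eq_C_mul, cons_val, map_one, Nat.reduceSub, Fin.coe_ofNat_eq_mod,
    Nat.reduceMod, pow_zero, pow_one]
  ring

theorem symCube_mulVec_single_one (A : Matrix (Fin 2) (Fin 2) ℂ) :
    symCube A *ᵥ Pi.single 1 1 =
      ![A 0 0 ^ 2 * A 1 0, A 0 0 ^ 2 * A 1 1 + 2 * A 0 0 * A 0 1 * A 1 0,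
        2 * A 0 0 * A 0 1 * A 1 1 + A 0 1 ^ 2 * A 1 0, A 0 1 ^ 2 * A 1 1] := by
  rw [← cubicCoords_monomial,
    symCube_mulVec_cubicCoords _ (isHomogeneous_monomial_cubicExponent 1 1)]
  refine .trans (congrArg cubicCoords ?_) (cubicCoords_sum_monomial _)
  simp only [Fin.sum_univ_four, monomial_cubicExponent, map_mul, map_pow, map_add, map_ofNat,
    linSubst_X, Fin.sum_univ_two, smul_eq_C_mul, cons_val, map_one, Nat.reduceSub,
    Fin.coe_ofNat_eq_mod, Nat.reduceMod, pow_zero, pow_one]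
  ring

end CubicForms

section Invariants

variable {P : MvPolynomial (Fin 4) ℂ}

theorem linSubst_symCube_eq_self {A : Matrix (Fin 2) (Fin 2) ℂ}
    (hP : ∀ f : MvPolynomial (Fin 2) ℂ, f.IsHomogeneous 3 →
      eval (cubicCoords (linSubst A f)) P = eval (cubicCoords f) P) :
    linSubst (symCube A) P = P := by
  refine MvPolynomial.funext fun c => ?_
  have hf : (∑ j, monomial (cubicExponent j) (c j)).IsHomogeneous 3 :=
    IsHomogeneous.sum _ _ _ fun j _ => isHomogeneous_monomial_cubicExponent j (c j)
  rw [eval_linSubst, ← cubicCoords_sum_monomial c, symCube_mulVec_cubicCoords A hf, hP _ hf]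

theorem linSubst_symCube_conj_eq_self {M x : SL(2, ℂ)} (hx : linSubst (symCube x.1) P = P) :
    linSubst (symCube (M * x * M⁻¹).1) (linSubst (symCube M.1) P) = linSubst (symCube M.1) P := by
  rw [linSubst_linSubst, ← symCube_mul, ← Matrix.SpecialLinearGroup.coe_mul,
    inv_mul_cancel_right, Matrix.SpecialLinearGroup.coe_mul, symCube_mul, ← linSubst_linSubst, hx]

theorem eq_zero_of_linSubst_symCube_eq_zero {M : SL(2, ℂ)} (hP : linSubst (symCube M.1) P = 0) :
    P = 0 := by
  have hcancel : linSubst (symCube (M⁻¹).1) (linSubst (symCube M.1) P) = P := by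
    rw [linSubst_linSubst, ← symCube_mul, ← Matrix.SpecialLinearGroup.coe_mul, inv_mul_cancel,
      Matrix.SpecialLinearGroup.coe_one, symCube_one, linSubst_one]
  rw [← hcancel, hP, map_zero]

theorem eq_zero_of_odd_of_symCube_neg_one_invariant {n : ℕ} (hn : Odd n) (hP : P.IsHomogeneous n)
    (hinv : linSubst (symCube (-1)) P = P) : P = 0 := by
  rw [symCube_neg_one, linSubst_neg_one hP, hn.neg_one_pow, neg_one_smul] at hinv
  exact neg_eq_self.1 hinv

theorem weight_eq_three_of_coeff_ne_zero_of_torus_invariant {z : ℂ} {k : ℕ}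
    (hz : IsPrimitiveRoot (z ^ 2) k) (hk : 3 < k)
    (hinv : linSubst (symCube (diagonal ![z, z⁻¹])) P = P)
    {m : Fin 4 →₀ ℕ} (hm : coeff m P ≠ 0) (hdeg : m 0 + m 1 + m 2 + m 3 = 2) :
    3 * m 0 + 2 * m 1 + m 2 = 3 := by
  have hz0 : z ≠ 0 := by
    rintro rfl
    simpa using hz.ne_zero (by lia)
  have hweight : ∏ i : Fin 4, (z ^ (3 - (i : ℕ)) * z⁻¹ ^ (i : ℕ)) ^ m i = 1 := by
    have h := congrArg (coeff m) hinv
    rw [symCube_diagonal, coeff_linSubst_diagonal] at h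
    exact (mul_eq_right₀ hm).1 h
  have hfactor (i : Fin 4) :
      z ^ (3 - (i : ℕ)) * z⁻¹ ^ (i : ℕ) * z ^ 3 = (z ^ 2) ^ (3 - (i : ℕ)) := by
    fin_cases i <;> simp <;> field_simp
  have hpow : (z ^ 2) ^ (3 * m 0 + 2 * m 1 + m 2) = (z ^ 2) ^ 3 := by
    calc (z ^ 2) ^ (3 * m 0 + 2 * m 1 + m 2)
        = ∏ i : Fin 4, ((z ^ 2) ^ (3 - (i : ℕ))) ^ m i := by
          simp only [← pow_mul _ _ (m _), Finset.prod_pow_eq_pow_sum]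
          simp [Fin.sum_univ_four]
      _ = (∏ i : Fin 4, (z ^ (3 - (i : ℕ)) * z⁻¹ ^ (i : ℕ)) ^ m i) *
            (z ^ 3) ^ (m 0 + m 1 + m 2 + m 3) := by
          simp only [← hfactor, mul_pow _ (z ^ 3), Finset.prod_mul_distrib,
            Finset.prod_pow_eq_pow_sum, Fin.sum_univ_four]
      _ = (z ^ 2) ^ 3 := by rw [hweight, hdeg, one_mul, pow_right_comm]
  have hmod : 3 * m 0 + 2 * m 1 + m 2 ≡ 3 [MOD k] := by
    rw [hz.eq_orderOf]
    exact (hz.isOfFinOrder (by lia)).pow_eq_pow_iff_modEq.1 hpow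
  exact hmod.eq_of_abs_lt (abs_lt.2 (by lia))

theorem eq_or_eq_of_coeff_ne_zero_of_torus_invariant {z : ℂ} {k : ℕ}
    (hz : IsPrimitiveRoot (z ^ 2) k) (hk : 3 < k) (hP : P.IsHomogeneous 2)
    (hinv : linSubst (symCube (diagonal ![z, z⁻¹])) P = P)
    {m : Fin 4 →₀ ℕ} (hm : coeff m P ≠ 0) :
    m = Finsupp.single 0 1 + Finsupp.single 3 1 ∨ m = Finsupp.single 1 1 + Finsupp.single 2 1 := by
  have hdeg : m 0 + m 1 + m 2 + m 3 = 2 := by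
    rw [← Fin.sum_univ_four, ← Finsupp.degree_eq_sum]
    by_contra h
    exact hm (hP.coeff_eq_zero h)
  have hweight := weight_eq_three_of_coeff_ne_zero_of_torus_invariant hz hk hinv hm hdeg
  obtain h | h : m 0 = 1 ∧ m 1 = 0 ∧ m 2 = 0 ∧ m 3 = 1 ∨
      m 0 = 0 ∧ m 1 = 1 ∧ m 2 = 1 ∧ m 3 = 0 := by lia
  · left
    ext i
    fin_cases i <;> simp [h]
  · right
    ext i
    fin_cases i <;> simp [h]

theorem exists_eq_add_of_torus_invariant {z : ℂ} {k : ℕ}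
    (hz : IsPrimitiveRoot (z ^ 2) k) (hk : 3 < k) (hP : P.IsHomogeneous 2)
    (hinv : linSubst (symCube (diagonal ![z, z⁻¹])) P = P) :
    ∃ p q : ℂ, P = C p * (X 0 * X 3) + C q * (X 1 * X 2) := by
  set m₁ : Fin 4 →₀ ℕ := Finsupp.single 0 1 + Finsupp.single 3 1 with hm₁
  set m₂ : Fin 4 →₀ ℕ := Finsupp.single 1 1 + Finsupp.single 2 1 with hm₂
  have hne : m₁ ≠ m₂ := fun h => by simpa [hm₁, hm₂] using DFunLike.congr_fun h 0
  have hsupport : P.support ⊆ {m₁, m₂} := fun m hm => by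
    simpa using eq_or_eq_of_coeff_ne_zero_of_torus_invariant hz hk hP hinv (mem_support_iff.1 hm)
  refine ⟨coeff m₁ P, coeff m₂ P, ?_⟩
  conv_lhs => rw [← support_sum_monomial_coeff P]
  rw [Finset.sum_subset hsupport fun m _ hm => by rw [notMem_support_iff.1 hm, monomial_zero],
    Finset.sum_pair hne]
  simp [hm₁, hm₂, X, monomial_mul, C_mul_monomial]

theorem eq_zero_of_torus_invariant_of_symCube_invariant {z : ℂ} {k : ℕ}
    (hz : IsPrimitiveRoot (z ^ 2) k) (hk : 3 < k)
    (hP : P.IsHomogeneous 2) (htorus : linSubst (symCube (diagonal ![z, z⁻¹])) P = P)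
    {A : SL(2, ℂ)} (hA : ∀ i j, A i j ≠ 0) (hinv : linSubst (symCube A.1) P = P) : P = 0 := by
  obtain ⟨p, q, rfl⟩ := exists_eq_add_of_torus_invariant hz hk hP htorus
  have eval_mulVec (c : Fin 4 → ℂ) :
      p * ((symCube A.1 *ᵥ c) 0 * (symCube A.1 *ᵥ c) 3) +
        q * ((symCube A.1 *ᵥ c) 1 * (symCube A.1 *ᵥ c) 2) = p * (c 0 * c 3) + q * (c 1 * c 2) := by
    simpa only [eval_linSubst, map_add, map_mul, eval_C, eval_X] using congrArg (eval c) hinv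
  have hdet : A 0 0 * A 1 1 - A 0 1 * A 1 0 = 1 := (det_fin_two A.1).symm.trans A.2
  -- The quadratic form vanishes at `x ^ 3` and `x ^ 2 * y`, hence at their images under `A`.
  have h0 : (A 0 0 * A 0 1) ^ 3 * (p + 9 * q) = 0 := by
    have h := eval_mulVec (Pi.single 0 1)
    rw [symCube_mulVec_single_zero] at h
    simp only [cons_val, Pi.single_apply, Fin.reduceEq, if_true, if_false] at h
    linear_combination h
  have h1 : A 0 0 * A 0 1 * (A 0 0 * A 0 1 * A 1 0 * A 1 1 * p +
      (A 0 0 * A 1 1 + 2 * A 0 1 * A 1 0) * (2 * A 0 0 * A 1 1 + A 0 1 * A 1 0) * q) = 0 := by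
    have h := eval_mulVec (Pi.single 1 1)
    rw [symCube_mulVec_single_one] at h
    simp only [cons_val, Pi.single_apply, Fin.reduceEq, if_true, if_false] at h
    linear_combination h
  have hab : A 0 0 * A 0 1 ≠ 0 := mul_ne_zero (hA 0 0) (hA 0 1)
  have hp : p = -9 * q := by
    linear_combination (mul_eq_zero.1 h0).resolve_left (pow_ne_zero 3 hab)
  have hq : q = 0 := by
    have h := (mul_eq_zero.1 h1).resolve_left hab
    rw [hp] at h
    have : 2 * (A 0 0 * A 1 1 - A 0 1 * A 1 0) ^ 2 * q = 0 := by linear_combination h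
    simpa [hdet] using this
  simp [hp, hq]

theorem eq_zero_of_isHomogeneous_two_of_conj_invariant {z : ℂ} {k : ℕ}
    (hz : IsPrimitiveRoot (z ^ 2) k) (hk : 3 < k) {M x y : SL(2, ℂ)}
    (hx : (M * x * M⁻¹).1 = diagonal ![z, z⁻¹])
    (hy : ∀ i j, (M * y * M⁻¹) i j ≠ 0) (hP : P.IsHomogeneous 2)
    (hPx : linSubst (symCube x.1) P = P) (hPy : linSubst (symCube y.1) P = P) : P = 0 :=
  eq_zero_of_linSubst_symCube_eq_zero <|
    eq_zero_of_torus_invariant_of_symCube_invariant hz hk (isHomogeneous_linSubst (symCube M.1) hP)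
      (hx ▸ linSubst_symCube_conj_eq_self hPx) hy (linSubst_symCube_conj_eq_self hPy)

end Invariants

/-- For a binary icosahedral group `G ≤ SL(2, ℂ)` (so `G/{±1} ≅ A₅`), the induced
4-dimensional representation on `Sym³(ℂ²)` is irreducible and the induced linear group has no
nonzero semi-invariant homogeneous polynomials of degree at most 3. -/
theorem stmt_6 (G : Subgroup (SpecialLinearGroup (Fin 2) ℂ)) (hGfin : Finite G)
    (hA5 : ∃ φ : G →* alternatingGroup (Fin 5), Function.Surjective φ ∧
      ∀ g : G, φ g = 1 ↔ ((g : SpecialLinearGroup (Fin 2) ℂ) = 1 ∨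
        (g : SpecialLinearGroup (Fin 2) ℂ) = -1)) :
    (∀ W : Submodule ℂ (MvPolynomial (Fin 2) ℂ),
      W ≤ MvPolynomial.homogeneousSubmodule (Fin 2) ℂ 3 →
      (∀ g ∈ G, ∀ f ∈ W, cubicAct g f ∈ W) →
      W = ⊥ ∨ W = MvPolynomial.homogeneousSubmodule (Fin 2) ℂ 3) ∧
    (∀ (P : MvPolynomial (Fin 4) ℂ) (d : ℕ), 1 ≤ d → d ≤ 3 → P.IsHomogeneous d →
      (∃ χ : G →* ℂˣ, ∀ (g : G) (f : MvPolynomial (Fin 2) ℂ), f.IsHomogeneous 3 →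
        MvPolynomial.eval
            (cubicCoords (cubicAct ((g : SpecialLinearGroup (Fin 2) ℂ))⁻¹ f)) P
          = (χ g : ℂ) * MvPolynomial.eval (cubicCoords f) P) →
      P = 0) := by
  obtain ⟨φ, hφ, hker⟩ := hA5
  obtain ⟨x, hx, y, hy, M, z, hz, hMx, hMy⟩ :=
    exists_conj_eq_diagonal_and_apply_ne_zero hφ hker isMulTorsion_of_finite
  refine ⟨fun W hW hGW => ?_, fun P d hd1 hd3 hP ⟨χ, hχ⟩ => ?_⟩
  · have linSubst_mem {g : SL(2, ℂ)} (hg : g ∈ G) : ∀ p ∈ W, linSubst g.1 p ∈ W := fun p hp => by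
      simpa only [cubicAct_eq_linSubst, inv_inv] using hGW g⁻¹ (inv_mem hg) p hp
    refine or_iff_not_imp_left.2 fun hbot => hW.antisymm ?_
    obtain ⟨f, hfW, hf0⟩ := W.ne_bot_iff.1 hbot
    exact homogeneousSubmodule_le_of_conj_invariant (linSubst_mem hx) (linSubst_mem hy) hMx
      (injOn_prod_pow_of_isPrimitiveRoot hz (by lia)) (hMy 0) (hMy · 0) (hW hfW) hfW hf0
  · have invariant {g : SL(2, ℂ)} (hg : g ∈ G) : linSubst (symCube g.1) P = P := by
      have hχ1 : χ ⟨g, hg⟩ = 1 := Abelianization.commutator_subset_ker χ <|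
        commutator_eq_top hφ hker ▸ Subgroup.mem_top _
      refine linSubst_symCube_eq_self fun f hf => ?_
      simpa [cubicAct_eq_linSubst, hχ1] using hχ ⟨g, hg⟩ f hf
    obtain ⟨c, -, hc⟩ := neg_one_mem_commutator hφ hker
    have invariant_neg_one : linSubst (symCube (-1)) P = P := by
      simpa [hc] using invariant c.2
    interval_cases d
    · exact eq_zero_of_odd_of_symCube_neg_one_invariant (by decide) hP invariant_neg_one
    · exact eq_zero_of_isHomogeneous_two_of_conj_invariant hz (by lia) hMx hMy hP
        (invariant hx) (invariant hy)
    · exact eq_zero_of_odd_of_symCube_neg_one_invariant (by decide) hP invariant_neg_one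
end

section
/- Let G be a finite subgroup of SL(2,ℂ) such that G/{±Id} is isomorphic to the alternating group A₄ or to the symmetric group S₄ (i.e., G is conjugate to the binary tetrahedral or binary octahedral group). Consider the induced action of G on the 4-dimensional space V = Sym³(ℂ²) of homogeneous degree-3 polynomials in two variables, given by (g·f)(v) = f(g⁻¹v). Then there exists a nonzero nondegenerate quadratic form Q on V that is a semi-invariant of G; equivalently, the induced projective action of G on ℙ(V) ≅ ℙ³ leaves a smooth quadric surface invariant. -/
open Matrix MvPolynomial

/-!
Identify binary cubics with symmetric tensors in `(ℂ²)^{⊗3}`. The preimage in `G` of the Klein four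
group of `S₄` is a quaternion group, generated by `N₀, N₁` with `N₀² = N₁² = N₂² = -1`, where
`N₂ = N₀ N₁`. If `ε` is the matrix of the symplectic form, the bilinear form
`N₀ ε ⊗ N₁ ε ⊗ N₂ ε` restricts to a quadratic form on symmetric tensors which is multilinear in the
`N k` and does not change when they are permuted. Since `g ε gᵀ = ε` on `SL₂`, an element of `G`
replaces each `N k` by a conjugate, and conjugation by `G` permutes the `N k` up to sign, so the
form is multiplied by `±1`. In an eigenbasis `e, N₁ e` of `N₀` it becomes a multiple of
`w₀ w₁ - w₂ w₃`, which is nondegenerate.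
-/

section TensorPower

variable {κ m n l R : Type*} [CommRing R]

variable (κ n R) in
/-- The tensors, given by their coordinates, that are invariant under permuting the factors. -/
def symmetricTensors : Submodule R ((κ → n) → R) where
  carrier := {t | ∀ (σ : Equiv.Perm κ) (p : κ → n), t (p ∘ σ) = t p}
  add_mem' ht hs σ p := congrArg₂ (· + ·) (ht σ p) (hs σ p)
  zero_mem' _ _ := rfl
  smul_mem' c _ ht σ p := congrArg (c • ·) (ht σ p)

variable [Fintype κ]

/-- The tensor (Kronecker) product of a finite family of matrices. -/
def tensorMatrix (S : κ → Matrix m n R) : Matrix (κ → m) (κ → n) R :=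
  of fun p q => ∏ k, S k (p k) (q k)

lemma tensorMatrix_mul [DecidableEq κ] [Fintype n] (S : κ → Matrix m n R) (T : κ → Matrix n l R) :
    tensorMatrix S * tensorMatrix T = tensorMatrix fun k => S k * T k := by
  ext p q
  simp only [tensorMatrix, mul_apply, of_apply, ← Finset.prod_mul_distrib, Fintype.prod_sum]

lemma tensorMatrix_transpose (S : κ → Matrix m n R) :
    (tensorMatrix S)ᵀ = tensorMatrix fun k => (S k)ᵀ :=
  rfl

lemma tensorMatrix_one [DecidableEq n] : tensorMatrix (fun _ : κ => (1 : Matrix n n R)) = 1 := by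
  ext p q
  simp [tensorMatrix, one_apply, Fintype.prod_ite_zero, funext_iff]

lemma tensorMatrix_smul (c : κ → R) (S : κ → Matrix m n R) :
    tensorMatrix (fun k => c k • S k) = (∏ k, c k) • tensorMatrix S := by
  ext p q
  simp [tensorMatrix, Finset.prod_mul_distrib]

lemma tensorMatrix_comp_perm_apply (S : κ → Matrix m n R) (σ : Equiv.Perm κ)
    (p : κ → m) (q : κ → n) :
    tensorMatrix (S ∘ σ) (p ∘ σ) (q ∘ σ) = tensorMatrix S p q :=
  Equiv.prod_comp σ fun k => S k (p k) (q k)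

lemma sum_comp_perm {M : Type*} [AddCommMonoid M] [DecidableEq κ] [Fintype n] (σ : Equiv.Perm κ)
    (F : (κ → n) → M) :
    ∑ p, F (p ∘ σ) = ∑ p, F p :=
  Equiv.sum_comp (σ.symm.arrowCongr (Equiv.refl n)) F

variable [DecidableEq κ] [Fintype n]

lemma tensorMatrix_comp_perm_mulVec (S : κ → Matrix m n R) (σ : Equiv.Perm κ) {t : (κ → n) → R}
    (ht : t ∈ symmetricTensors κ n R) (p : κ → m) :
    (tensorMatrix (S ∘ σ) *ᵥ t) (p ∘ σ) = (tensorMatrix S *ᵥ t) p := by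
  simp only [mulVec, dotProduct]
  rw [← sum_comp_perm σ]
  exact Finset.sum_congr rfl fun q _ => by rw [tensorMatrix_comp_perm_apply, ht σ q]

/-- The action of `g` on symmetric tensors induced by the substitution `X i ↦ ∑ j, g i j * X j` in
polynomials. It reverses products. -/
def symPow (g : Matrix n n R) : symmetricTensors κ n R →ₗ[R] symmetricTensors κ n R :=
  (tensorMatrix fun _ => gᵀ).mulVecLin.restrict fun _ ht σ =>
    tensorMatrix_comp_perm_mulVec (fun _ => gᵀ) σ ht

lemma coe_symPow (g : Matrix n n R) (t : symmetricTensors κ n R) :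
    (symPow g t : (κ → n) → R) = tensorMatrix (fun _ => gᵀ) *ᵥ t :=
  rfl

lemma symPow_mul_apply (g h : Matrix n n R) (t : symmetricTensors κ n R) :
    symPow (g * h) t = symPow h (symPow g t) := by
  ext1
  simp only [coe_symPow, mulVec_mulVec, tensorMatrix_mul, transpose_mul]

lemma symPow_one_apply [DecidableEq n] (t : symmetricTensors κ n R) :
    symPow (1 : Matrix n n R) t = t := by
  ext1
  rw [coe_symPow, transpose_one, tensorMatrix_one, one_mulVec]

/-- The restriction to symmetric tensors of the quadratic form with matrix the tensor product of the
`S k`. -/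
def symForm [DecidableEq n] (S : κ → Matrix n n R) : QuadraticForm R (symmetricTensors κ n R) :=
  (tensorMatrix S).toQuadraticForm'.restrict (symmetricTensors κ n R)

variable [DecidableEq n]

lemma symForm_apply (S : κ → Matrix n n R) (t : symmetricTensors κ n R) :
    symForm S t = (t : (κ → n) → R) ⬝ᵥ tensorMatrix S *ᵥ t :=
  Matrix.toLinearMap₂'_apply' _ _ _

lemma symForm_comp_perm (S : κ → Matrix n n R) (σ : Equiv.Perm κ) :
    symForm (S ∘ σ) = symForm S := by
  ext t
  rw [symForm_apply, symForm_apply, dotProduct, ← sum_comp_perm σ]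
  exact Finset.sum_congr rfl fun p _ => by
    rw [t.2 σ p, tensorMatrix_comp_perm_mulVec S σ t.2]

lemma symForm_smul (c : κ → R) (S : κ → Matrix n n R) :
    symForm (fun k => c k • S k) = (∏ k, c k) • symForm S := by
  ext t
  simp [symForm_apply, tensorMatrix_smul, smul_mulVec]

lemma symForm_symPow (S : κ → Matrix n n R) (g : Matrix n n R) (t : symmetricTensors κ n R) :
    symForm S (symPow g t) = symForm (fun k => g * S k * gᵀ) t := by
  rw [symForm_apply, symForm_apply, coe_symPow]
  nth_rw 1 [← tensorMatrix_transpose fun _ : κ => g]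
  rw [mulVec_transpose, ← dotProduct_mulVec, mulVec_mulVec, mulVec_mulVec, tensorMatrix_mul,
    tensorMatrix_mul]

lemma symPow_bijective {g : Matrix n n R} (hg : IsUnit g.det) :
    Function.Bijective (symPow g : symmetricTensors κ n R →ₗ[R] symmetricTensors κ n R) :=
  Function.bijective_iff_has_inverse.2 ⟨symPow g⁻¹,
    fun t => by rw [← symPow_mul_apply, mul_nonsing_inv g hg, symPow_one_apply],
    fun t => by rw [← symPow_mul_apply, nonsing_inv_mul g hg, symPow_one_apply]⟩

end TensorPower

lemma exists_isHomogeneous_two_eval_eq {σ R : Type*} [Finite σ] [CommRing R]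
    (q : QuadraticForm R (σ → R)) :
    ∃ Q : MvPolynomial σ R, Q.IsHomogeneous 2 ∧ ∀ v, eval v Q = q v := by
  classical
  cases nonempty_fintype σ
  obtain ⟨B, rfl⟩ := LinearMap.BilinMap.toQuadraticMap_surjective q
  refine ⟨∑ i, ∑ j, C (B (Pi.single i 1) (Pi.single j 1)) * (X i * X j), ?_, fun v => ?_⟩
  · exact .sum _ _ _ fun i _ => .sum _ _ _ fun j _ =>
      ((isHomogeneous_X R i).mul (isHomogeneous_X R j)).C_mul _
  · have hv := LinearMap.sum_repr_mul_repr_mul (Pi.basisFun R σ) (Pi.basisFun R σ) (B := B) v v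
    simp only [Finsupp.sum_fintype, Pi.basisFun_repr, Pi.basisFun_apply, smul_eq_mul, zero_mul,
      mul_zero, Finset.sum_const_zero, implies_true] at hv
    simp only [map_sum, map_mul, eval_C, eval_X, LinearMap.BilinMap.toQuadraticMap_apply]
    rw [← hv]
    exact Finset.sum_congr rfl fun i _ => Finset.sum_congr rfl fun j _ => by ring

/-- A family satisfying Hamilton's relations for the quaternion units `i`, `j`, `k`. -/
structure IsQuaternionFrame {R : Type*} [Mul R] [One R] [Neg R] (N : Fin 3 → R) : Prop where
  sq_eq : ∀ k, N k * N k = -1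
  mul_eq : N 0 * N 1 = N 2

lemma IsQuaternionFrame.anticomm {R : Type*} [Monoid R] [HasDistribNeg R] {N : Fin 3 → R}
    (hN : IsQuaternionFrame N) : N 1 * N 0 = -(N 0 * N 1) :=
  calc N 1 * N 0 = (N 0 * N 0) * (N 1 * N 0) * (N 1 * N 1) := by
        rw [hN.sq_eq, hN.sq_eq, neg_one_mul, mul_neg_one, neg_neg]
    _ = N 0 * (N 0 * N 1 * (N 0 * N 1)) * N 1 := by simp only [mul_assoc]
    _ = -(N 0 * N 1) := by rw [hN.mul_eq, hN.sq_eq, mul_neg_one, neg_mul, hN.mul_eq]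

/-- The quaternion frame, for `μ * μ = -1`, in a basis `e, f` where the first member is diagonal
with eigenvalues `μ, -μ` and the second maps `e` to `f`. -/
def diagonalFrame {K : Type*} [CommRing K] (μ : K) : Fin 3 → Matrix (Fin 2) (Fin 2) K :=
  ![!![μ, 0; 0, -μ], !![0, -1; 1, 0], !![0, -μ; -μ, 0]]

section Eigenbasis

variable {K : Type*} [Field K] [IsAlgClosed K] [NeZero (2 : K)]
  {N : Fin 3 → Matrix (Fin 2) (Fin 2) K}

lemma IsQuaternionFrame.exists_eigenbasis (hN : IsQuaternionFrame N) :
    ∃ (μ : K) (e f : Fin 2 → K), μ * μ = -1 ∧ N 0 *ᵥ e = μ • e ∧ N 0 *ᵥ f = -μ • f ∧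
      N 1 *ᵥ e = f ∧ LinearIndependent K ![e, f] := by
  obtain ⟨μ, hμ⟩ := Module.End.exists_eigenvalue (toLin' (N 0))
  obtain ⟨e, he⟩ := hμ.exists_hasEigenvector
  have h0e : N 0 *ᵥ e = μ • e := he.apply_eq_smul
  have hμμ : μ * μ = -1 := smul_left_injective K he.2 <| by
    simp only [mul_smul, ← h0e, ← mulVec_smul, mulVec_mulVec, hN.sq_eq, neg_mulVec, one_mulVec,
      neg_smul, one_smul]
  have h01e : N 0 *ᵥ N 1 *ᵥ e = -μ • N 1 *ᵥ e := by
    rw [mulVec_mulVec, ← neg_eq_iff_eq_neg.2 hN.anticomm, neg_mulVec, ← mulVec_mulVec, h0e,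
      mulVec_smul, neg_smul]
  have h1e : N 1 *ᵥ e ≠ 0 := fun h => he.2 <| by
    rw [← neg_eq_zero, ← one_mulVec e, ← neg_mulVec, ← hN.sq_eq 1, ← mulVec_mulVec, h, mulVec_zero]
  have hμ_ne : μ ≠ -μ := fun h => by
    have hμ0 : μ = 0 := by
      rw [eq_neg_iff_add_eq_zero, ← two_mul] at h
      exact (mul_eq_zero.1 h).resolve_left two_ne_zero
    simp [hμ0] at hμμ
  refine ⟨μ, e, N 1 *ᵥ e, hμμ, h0e, h01e, rfl,
    Module.End.eigenvectors_linearIndependent' (toLin' (N 0)) ![μ, -μ] ?_ _ ?_⟩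
  · simpa [Function.Injective, Fin.forall_fin_two, eq_comm] using hμ_ne
  · exact Fin.forall_fin_two.2 ⟨he, Module.End.mem_eigenspace_iff.2 h01e, h1e⟩

lemma IsQuaternionFrame.exists_mul_eq_mul_diagonalFrame (hN : IsQuaternionFrame N) :
    ∃ (μ : K) (P : Matrix (Fin 2) (Fin 2) K), μ * μ = -1 ∧ IsUnit P.det ∧
      ∀ k, N k * P = P * diagonalFrame μ k := by
  obtain ⟨μ, e, f, hμμ, h0e, h0f, h1e, hind⟩ := hN.exists_eigenbasis
  have h1f : N 1 *ᵥ f = -e := by rw [← h1e, mulVec_mulVec, hN.sq_eq, neg_mulVec, one_mulVec]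
  have h2e : N 2 *ᵥ e = -μ • f := by rw [← hN.mul_eq, ← mulVec_mulVec, h1e, h0f]
  have h2f : N 2 *ᵥ f = -μ • e := by
    rw [← hN.mul_eq, ← mulVec_mulVec, h1f, mulVec_neg, h0e, neg_smul]
  let P : Matrix (Fin 2) (Fin 2) K := (of ![e, f])ᵀ
  refine ⟨μ, P, hμμ, ?_, fun k => ?_⟩
  · rw [← isUnit_iff_isUnit_det]
    exact linearIndependent_cols_iff_isUnit.1 hind
  · ext i j
    change (N k *ᵥ ![e, f] j) i = _
    fin_cases k <;> fin_cases j <;>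
      simp [diagonalFrame, mul_apply, P, h0e, h0f, h1e, h1f, h2e, h2f, mul_comm]

end Eigenbasis

/-- The quadratic form on symmetric tensors attached to a frame `N`. Multiplication by the matrix of
the symplectic form turns conjugation of `N` into congruence. -/
def frameForm {R : Type*} [CommRing R] (N : Fin 3 → Matrix (Fin 2) (Fin 2) R) :
    QuadraticForm R (symmetricTensors (Fin 3) (Fin 2) R) :=
  symForm fun k => N k * !![0, 1; -1, 0]

lemma frameForm_symPow {R : Type*} [CommRing R] {M N : Fin 3 → Matrix (Fin 2) (Fin 2) R}
    {g : Matrix (Fin 2) (Fin 2) R} {σ : Equiv.Perm (Fin 3)} {c : Fin 3 → R}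
    (h : ∀ k, g * M k = c k • (N (σ k) * g)) (t : symmetricTensors (Fin 3) (Fin 2) R) :
    frameForm M (symPow g t) = (∏ k, g.det * c k) * frameForm N t := by
  have hg : g * !![0, 1; -1, 0] * gᵀ = g.det • !![0, 1; -1, 0] := by
    ext i j
    fin_cases i <;> fin_cases j <;> simp [mul_apply, Fin.sum_univ_two, det_fin_two] <;> ring
  have hM (k) : g * (M k * !![0, 1; -1, 0]) * gᵀ
      = (g.det * c k) • ((fun k => N k * !![0, 1; -1, 0]) ∘ σ) k := by
    rw [← Matrix.mul_assoc, h, smul_mul, smul_mul, Matrix.mul_assoc, Matrix.mul_assoc,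
      ← Matrix.mul_assoc g, hg, Matrix.mul_smul, smul_smul, mul_comm, Function.comp_apply]
  rw [frameForm, symForm_symPow, funext hM, symForm_smul, symForm_comp_perm]
  rfl

/-- The number of entries of `p` equal to `1`, at most `3`, so that the sum does not wrap around. -/
def weight (p : Fin 3 → Fin 2) : Fin 4 :=
  ∑ k, (p k).castLE (by norm_num)

lemma weight_comp_perm (p : Fin 3 → Fin 2) (σ : Equiv.Perm (Fin 3)) :
    weight (p ∘ σ) = weight p :=
  Equiv.sum_comp σ fun k => (p k).castLE _

/-- The index with `i` ones followed by zeros, a representative of the indices of weight `i`. -/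
def sortedIndex (i : Fin 4) (k : Fin 3) : Fin 2 :=
  if k.castSucc < i then 1 else 0

lemma weight_sortedIndex (i : Fin 4) : weight (sortedIndex i) = i := by
  decide +revert

lemma exists_comp_perm_eq_sortedIndex (p : Fin 3 → Fin 2) :
    ∃ σ : Equiv.Perm (Fin 3), p ∘ σ = sortedIndex (weight p) := by
  decide +revert

/-- A symmetric tensor, as an array with two-valued indices, is a function of the weight. -/
def weightEquiv (R : Type*) [CommRing R] :
    (Fin 4 → R) ≃ₗ[R] symmetricTensors (Fin 3) (Fin 2) R where
  toFun w := ⟨w ∘ weight, fun σ p => congrArg w (weight_comp_perm p σ)⟩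
  map_add' _ _ := rfl
  map_smul' _ _ := rfl
  invFun t i := t.1 (sortedIndex i)
  left_inv w := funext fun i => congrArg w (weight_sortedIndex i)
  right_inv t := by
    ext p
    obtain ⟨σ, hσ⟩ := exists_comp_perm_eq_sortedIndex p
    exact (congrArg t.1 hσ).symm.trans (t.2 σ p)

lemma sum_fin_three_arrow {M n : Type*} [AddCommMonoid M] [Fintype n] (F : (Fin 3 → n) → M) :
    ∑ p, F p = ∑ i, ∑ j, ∑ k, F ![i, j, k] := by
  simp only [← (Fin.consEquiv _).sum_comp, Nat.reduceAdd, Fintype.sum_prod_type,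
    Finset.univ_unique, Finset.sum_singleton]
  rfl

lemma frameForm_diagonalFrame {R : Type*} [CommRing R] (μ : R) (w : Fin 4 → R) :
    frameForm (diagonalFrame μ) (weightEquiv R w) = 2 * (μ * μ) * (w 0 * w 1 - w 2 * w 3) := by
  have hS : (fun k => diagonalFrame μ k * !![0, 1; -1, 0]) =
      ![!![0, μ; μ, 0], !![1, 0; 0, 1], !![μ, 0; 0, -μ]] := by
    ext k
    fin_cases k <;> simp [diagonalFrame]
  have hw (p) : (weightEquiv R w).1 p = w (weight p) := rfl
  rw [frameForm, hS, symForm_apply]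
  simp only [dotProduct, mulVec, sum_fin_three_arrow, hw]
  simp [tensorMatrix, weight, Fin.sum_univ_two, Fin.sum_univ_three, Fin.prod_univ_three]
  ring

lemma frameForm_diagonalFrame_separatingLeft {K : Type*} [Field K] [NeZero (2 : K)] {μ : K}
    (hμ : μ ≠ 0) : (frameForm (diagonalFrame μ)).polarBilin.SeparatingLeft := by
  intro t ht
  obtain ⟨w, rfl⟩ := (weightEquiv K).surjective t
  have hw (v : Fin 4 → K) : w 0 * v 1 + w 1 * v 0 - w 2 * v 3 - w 3 * v 2 = 0 := by
    have hv := ht (weightEquiv K v)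
    simp only [QuadraticMap.polarBilin_apply_apply, QuadraticMap.polar, ← map_add,
      frameForm_diagonalFrame, Pi.add_apply] at hv
    refine (mul_eq_zero.1 ?_).resolve_left (mul_ne_zero two_ne_zero (mul_ne_zero hμ hμ))
    linear_combination hv
  suffices w = 0 by rw [this, map_zero]
  ext i
  fin_cases i
  · simpa using hw (Pi.single 1 1)
  · simpa using hw (Pi.single 0 1)
  · simpa using hw (Pi.single 3 1)
  · simpa using hw (Pi.single 2 1)

lemma IsQuaternionFrame.separatingLeft_frameForm {K : Type*} [Field K] [IsAlgClosed K]
    [NeZero (2 : K)] {N : Fin 3 → Matrix (Fin 2) (Fin 2) K} (hN : IsQuaternionFrame N) :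
    (frameForm N).polarBilin.SeparatingLeft := by
  obtain ⟨μ, P, hμμ, hP, hNP⟩ := hN.exists_mul_eq_mul_diagonalFrame
  have hμ : μ ≠ 0 := by rintro rfl; simp at hμμ
  have hform (t) : frameForm (diagonalFrame μ) (symPow P t) = P.det ^ 3 * frameForm N t := by
    rw [frameForm_symPow (N := N) (σ := 1) (c := 1) fun k => by simp [hNP]]
    simp
  intro t ht
  have hPt : symPow P t = 0 := by
    refine frameForm_diagonalFrame_separatingLeft hμ _ fun s => ?_
    obtain ⟨s, rfl⟩ := (symPow_bijective hP).surjective s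
    have hts := ht s
    simp only [QuadraticMap.polarBilin_apply_apply, QuadraticMap.polar, ← map_add, hform] at hts ⊢
    linear_combination P.det ^ 3 * hts
  exact (symPow_bijective hP).injective (hPt.trans (map_zero _).symm)

section TensorPoly

variable {κ n R : Type*} [Fintype κ] [Fintype n] [DecidableEq κ] [CommRing R]

/-- The homogeneous polynomial obtained by restricting the multilinear form with coefficients `t`
to the diagonal. -/
noncomputable def tensorPoly (t : (κ → n) → R) : MvPolynomial n R :=
  ∑ p, C (t p) * ∏ k, X (p k)

lemma isHomogeneous_tensorPoly (t : (κ → n) → R) :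
    (tensorPoly t).IsHomogeneous (Fintype.card κ) :=
  .sum _ _ _ fun p _ => by
    simpa using (IsHomogeneous.prod Finset.univ _ _ fun k _ => isHomogeneous_X R (p k)).C_mul (t p)

lemma aeval_tensorPoly (g : Matrix n n R) (t : symmetricTensors κ n R) :
    aeval (fun i => ∑ j, C (g i j) * X j) (tensorPoly t.1) =
      (tensorPoly (symPow g t).1 : MvPolynomial n R) := by
  have hcoeff (q : κ → n) : (symPow g t).1 q = ∑ p, t.1 p * ∏ k, g (p k) (q k) :=
    Finset.sum_congr rfl fun p _ => mul_comm _ _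
  simp only [tensorPoly, map_sum, map_mul, map_prod, aeval_X, ← algebraMap_eq,
    AlgHom.commutes, hcoeff, Fintype.prod_sum, Finset.mul_sum, Finset.sum_mul,
    Finset.prod_mul_distrib]
  rw [Finset.sum_comm]
  simp only [mul_assoc]

lemma coeff_tensorPoly [DecidableEq n] (t : (κ → n) → R) (d : n →₀ ℕ) :
    coeff d (tensorPoly t) = ∑ p with ∑ k, Finsupp.single (p k) 1 = d, t p := by
  have hmon (p : κ → n) :
      C (t p) * ∏ k, X (p k) = monomial (∑ k, Finsupp.single (p k) 1) (t p) := by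
    rw [← mul_one (t p), ← C_mul_monomial, monomial_sum_one, mul_one]
    rfl
  simp only [tensorPoly, hmon, coeff_sum, coeff_monomial, Finset.sum_filter]

end TensorPoly

lemma sum_single_eq_iff_weight_eq (p : Fin 3 → Fin 2) (i : Fin 4) :
    ∑ k, Finsupp.single (p k) 1 = Finsupp.single 0 (3 - (i : ℕ)) + Finsupp.single 1 (i : ℕ) ↔
      weight p = i := by
  simp only [Finsupp.ext_iff, Fin.forall_fin_two, Finsupp.finsetSum_apply, Finsupp.add_apply,
    Finsupp.single_apply]
  decide +revert

lemma card_weight_eq (i : Fin 4) : Finset.card {p | weight p = i} = Nat.choose 3 i := by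
  decide +revert

lemma cubicCoords_tensorPoly_weightEquiv (w : Fin 4 → ℂ) (i : Fin 4) :
    cubicCoords (tensorPoly (weightEquiv ℂ w).1) i = Nat.choose 3 i * w i := by
  rw [cubicCoords, coeff_tensorPoly]
  simp only [sum_single_eq_iff_weight_eq]
  have hw (p) (hp : p ∈ Finset.univ.filter (weight · = i)) : (weightEquiv ℂ w).1 p = w i :=
    congrArg w (Finset.mem_filter.1 hp).2
  rw [Finset.sum_congr rfl hw, Finset.sum_const, card_weight_eq, nsmul_eq_mul]

lemma eq_of_cubicCoords_eq {f g : MvPolynomial (Fin 2) ℂ} (hf : f.IsHomogeneous 3)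
    (hg : g.IsHomogeneous 3) (h : cubicCoords f = cubicCoords g) : f = g := by
  ext d
  by_cases hd : d.degree = 3
  · rw [Finsupp.degree_eq_sum, Fin.sum_univ_two] at hd
    have hd' : Finsupp.single 0 (3 - d 1) + Finsupp.single 1 (d 1) = d := by
      ext i
      fin_cases i <;> simp; omega
    simpa only [cubicCoords, hd'] using congrFun h ⟨d 1, by omega⟩
  · rw [hf.coeff_eq_zero hd, hg.coeff_eq_zero hd]

/-- The symmetric tensor of a binary cubic form with given monomial coefficients. The binomial
coefficients count the tensor entries that contribute to each monomial. -/
noncomputable def cubicTensor : (Fin 4 → ℂ) ≃ₗ[ℂ] symmetricTensors (Fin 3) (Fin 2) ℂ :=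
  (LinearEquiv.piCongrRight fun i : Fin 4 => LinearEquiv.smulOfNeZero ℂ ℂ (Nat.choose 3 i : ℂ)⁻¹
    (inv_ne_zero <| Nat.cast_ne_zero.2 (Nat.choose_pos (Nat.le_of_lt_succ i.2)).ne')) ≪≫ₗ
    weightEquiv ℂ

lemma cubicCoords_tensorPoly_cubicTensor (v : Fin 4 → ℂ) :
    cubicCoords (tensorPoly (cubicTensor v).1) = v := by
  ext i
  refine (cubicCoords_tensorPoly_weightEquiv _ i).trans <| mul_inv_cancel_left₀ ?_ _
  exact Nat.cast_ne_zero.2 (Nat.choose_pos (Nat.le_of_lt_succ i.2)).ne'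

lemma tensorPoly_cubicTensor_cubicCoords {f : MvPolynomial (Fin 2) ℂ} (hf : f.IsHomogeneous 3) :
    tensorPoly (cubicTensor (cubicCoords f)).1 = f :=
  eq_of_cubicCoords_eq (isHomogeneous_tensorPoly _) hf (cubicCoords_tensorPoly_cubicTensor _)

lemma cubicTensor_cubicCoords_cubicAct_inv (g : SpecialLinearGroup (Fin 2) ℂ)
    {f : MvPolynomial (Fin 2) ℂ} (hf : f.IsHomogeneous 3) :
    cubicTensor (cubicCoords (cubicAct g⁻¹ f)) = symPow ↑g (cubicTensor (cubicCoords f)) := by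
  obtain ⟨v, hv⟩ := cubicTensor.surjective (symPow ↑g (cubicTensor (cubicCoords f)))
  nth_rw 1 [← tensorPoly_cubicTensor_cubicCoords hf]
  rw [cubicAct, inv_inv, aeval_tensorPoly, ← hv, cubicCoords_tensorPoly_cubicTensor]

lemma exists_monoidHom_of_semiinvariant {G X R : Type*} [Monoid G] [CommRing R] [IsDomain R]
    {act : G → X → X} (hact : ∀ g h x, act (g * h) x = act h (act g x)) {q : X → R}
    (hq : ∃ x, q x ≠ 0) (h : ∀ g, ∃ c : Rˣ, ∀ x, q (act g x) = c * q x) :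
    ∃ χ : G →* Rˣ, ∀ g x, q (act g x) = χ g * q x := by
  choose χ hχ using h
  obtain ⟨x, hx⟩ := hq
  refine ⟨MonoidHom.mk' χ fun g h => Units.ext <| mul_right_cancel₀ hx ?_, hχ⟩
  rw [← hχ, hact, hχ, hχ, Units.val_mul, mul_left_comm, mul_assoc]

/-- Conjugation by `g` permutes the members of `N` up to sign, phrased without inverses. -/
def PermutesUpToSign {ι M : Type*} [Mul M] [Neg M] (g : M) (N : ι → M) : Prop :=
  ∃ σ : Equiv.Perm ι, ∀ k, g * N k = N (σ k) * g ∨ g * N k = -(N (σ k) * g)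

lemma PermutesUpToSign.exists_frameForm_symPow {R : Type*} [CommRing R]
    {N : Fin 3 → Matrix (Fin 2) (Fin 2) R} {g : Matrix (Fin 2) (Fin 2) R}
    (hgN : PermutesUpToSign g N) (hg : IsUnit g.det) :
    ∃ c : Rˣ, ∀ t, frameForm N (symPow g t) = c * frameForm N t := by
  obtain ⟨σ, hσ⟩ := hgN
  have hsign (k) : ∃ ε : Rˣ, g * N k = (ε : R) • (N (σ k) * g) :=
    (hσ k).elim (fun h => ⟨1, by simp [h]⟩) fun h => ⟨-1, by simp [h]⟩
  choose ε hε using hsign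
  exact ⟨∏ k, hg.unit * ε k, fun t => by simp [frameForm_symPow hε]⟩

section Coe

variable {R : Type*} [CommRing R] {N : Fin 3 → SpecialLinearGroup (Fin 2) R}

lemma IsQuaternionFrame.coe_matrix (hN : IsQuaternionFrame N) :
    IsQuaternionFrame fun k => (N k : Matrix (Fin 2) (Fin 2) R) where
  sq_eq k := by simp [← Matrix.SpecialLinearGroup.coe_mul, hN.sq_eq]
  mul_eq := by simp [← Matrix.SpecialLinearGroup.coe_mul, hN.mul_eq]

lemma PermutesUpToSign.coe_matrix {g : SpecialLinearGroup (Fin 2) R} (hg : PermutesUpToSign g N) :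
    PermutesUpToSign (g : Matrix (Fin 2) (Fin 2) R) fun k => (N k : Matrix (Fin 2) (Fin 2) R) :=
  hg.imp fun _ hσ k => (hσ k).imp
    (fun h => by simp only [← Matrix.SpecialLinearGroup.coe_mul, h])
    (fun h => by
      simp only [← Matrix.SpecialLinearGroup.coe_mul, h, Matrix.SpecialLinearGroup.coe_neg])

end Coe

lemma specialLinearGroup_two_eq_one_or_eq_neg_one {K : Type*} [Field K] [NeZero (2 : K)]
    {x : SpecialLinearGroup (Fin 2) K} (hx : x * x = 1) : x = 1 ∨ x = -1 := by
  have hinv : (x : Matrix (Fin 2) (Fin 2) K) = !![x 1 1, -x 0 1; -x 1 0, x 0 0] :=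
    (congrArg (fun y : SpecialLinearGroup (Fin 2) K => y.1) (eq_inv_of_mul_eq_one_left hx)).trans
      ((Matrix.SpecialLinearGroup.coe_inv x).trans (adjugate_fin_two _))
  have h00 : x 0 0 = x 1 1 := congrFun₂ hinv 0 0
  have h01 : x 0 1 = 0 := by
    have h : x 0 1 = -x 0 1 := congrFun₂ hinv 0 1
    rwa [eq_neg_iff_add_eq_zero, ← two_mul, mul_eq_zero_iff_left two_ne_zero] at h
  have h10 : x 1 0 = 0 := by
    have h : x 1 0 = -x 1 0 := congrFun₂ hinv 1 0
    rwa [eq_neg_iff_add_eq_zero, ← two_mul, mul_eq_zero_iff_left two_ne_zero] at h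
  have hdet := x.det_coe
  rw [det_fin_two, h00, h01, zero_mul, sub_zero, mul_self_eq_one_iff] at hdet
  refine hdet.imp (fun h => ?_) fun h => ?_ <;>
  · ext i j
    fin_cases i <;> fin_cases j <;> simp [h, h00, h01, h10]

/-- Two commuting involutions and their product, the nontrivial elements of a Klein four group. -/
structure IsKleinFrame {P : Type*} [Mul P] [One P] (v : Fin 3 → P) : Prop where
  ne_one : ∀ k, v k ≠ 1
  mul_self_eq_one : ∀ k, v k * v k = 1
  mul_eq : v 0 * v 1 = v 2

section Lift

variable {H P : Type*} [Group H] [HasDistribNeg H] [Group P] {G : Subgroup H} {ψ : G →* P}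

lemma eq_or_eq_neg_of_map_eq (hψ : ∀ g, ψ g = 1 ↔ (g : H) = 1 ∨ (g : H) = -1) {a b : G}
    (hab : ψ a = ψ b) : (a : H) = b ∨ (a : H) = -b := by
  have hker : ψ (a * b⁻¹) = 1 := by rw [map_mul, map_inv, hab, mul_inv_cancel]
  simpa [mul_inv_eq_iff_eq_mul] using (hψ _).1 hker

lemma IsKleinFrame.exists_isQuaternionFrame_lift
    (hH : ∀ x : H, x * x = 1 → x = 1 ∨ x = -1)
    (hψ : ∀ g, ψ g = 1 ↔ (g : H) = 1 ∨ (g : H) = -1) {v : Fin 3 → P} (hv : IsKleinFrame v)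
    (hmem : ∀ k, v k ∈ ψ.range) :
    ∃ x : Fin 3 → G, (∀ k, ψ (x k) = v k) ∧ IsQuaternionFrame fun k => (x k : H) := by
  choose y hy using hmem
  have hx (k) : ψ (![y 0, y 1, y 0 * y 1] k) = v k := by
    fin_cases k <;> simp [hy, hv.mul_eq]
  refine ⟨![y 0, y 1, y 0 * y 1], hx, fun k => ?_, rfl⟩
  generalize ![y 0, y 1, y 0 * y 1] k = z, hx k = hz
  have hzz : ψ (z * z) = 1 := by rw [map_mul, hz, hv.mul_self_eq_one]
  exact ((hψ _).1 hzz).resolve_left fun h => hv.ne_one k (hz ▸ (hψ z).2 (hH z h))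

theorem IsKleinFrame.exists_isQuaternionFrame_permutesUpToSign
    (hH : ∀ x : H, x * x = 1 → x = 1 ∨ x = -1)
    (hψ : ∀ g, ψ g = 1 ↔ (g : H) = 1 ∨ (g : H) = -1) {v : Fin 3 → P} (hv : IsKleinFrame v)
    (hmem : ∀ k, v k ∈ ψ.range)
    (hperm : ∀ p, ∃ σ : Equiv.Perm (Fin 3), ∀ k, p * v k = v (σ k) * p) :
    ∃ N : Fin 3 → H, IsQuaternionFrame N ∧ ∀ g ∈ G, PermutesUpToSign g N := by
  obtain ⟨x, hx, hN⟩ := hv.exists_isQuaternionFrame_lift hH hψ hmem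
  refine ⟨_, hN, fun g hg => ?_⟩
  obtain ⟨σ, hσ⟩ := hperm (ψ ⟨g, hg⟩)
  exact ⟨σ, fun k => eq_or_eq_neg_of_map_eq hψ (a := ⟨g, hg⟩ * x k) (b := x (σ k) * ⟨g, hg⟩)
    (by simp only [map_mul, hx, hσ])⟩

end Lift

/-- The double transpositions in `S₄`. -/
def doubleTransposition : Fin 3 → Equiv.Perm (Fin 4) :=
  ![.swap 0 1 * .swap 2 3, .swap 0 2 * .swap 1 3, .swap 0 3 * .swap 1 2]

lemma isKleinFrame_doubleTransposition : IsKleinFrame doubleTransposition := by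
  constructor <;> decide

lemma doubleTransposition_mem_alternatingGroup (k : Fin 3) :
    doubleTransposition k ∈ alternatingGroup (Fin 4) := by
  rw [Equiv.Perm.mem_alternatingGroup]
  decide +revert

lemma exists_perm_mul_doubleTransposition (p : Equiv.Perm (Fin 4)) :
    ∃ σ : Equiv.Perm (Fin 3), ∀ k, p * doubleTransposition k = doubleTransposition (σ k) * p := by
  decide +revert

lemma exists_hom_perm_alternatingGroup_le_range {G : Type*} [Group G] {p : G → Prop}
    (h : (∃ φ : G →* alternatingGroup (Fin 4), Function.Surjective φ ∧ ∀ g, φ g = 1 ↔ p g) ∨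
      ∃ φ : G →* Equiv.Perm (Fin 4), Function.Surjective φ ∧ ∀ g, φ g = 1 ↔ p g) :
    ∃ ψ : G →* Equiv.Perm (Fin 4), alternatingGroup (Fin 4) ≤ ψ.range ∧ ∀ g, ψ g = 1 ↔ p g := by
  rcases h with ⟨φ, hφ, hker⟩ | ⟨φ, hφ, hker⟩
  · refine ⟨(alternatingGroup (Fin 4)).subtype.comp φ, fun x hx => ?_, fun g => by simp [hker]⟩
    obtain ⟨g, hg⟩ := hφ ⟨x, hx⟩
    exact ⟨g, congrArg Subtype.val hg⟩
  · exact ⟨φ, fun x _ => hφ x, hker⟩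

theorem stmt_7_general (G : Subgroup (SpecialLinearGroup (Fin 2) ℂ))
    {N : Fin 3 → SpecialLinearGroup (Fin 2) ℂ} (hN : IsQuaternionFrame N)
    (hG : ∀ g ∈ G, PermutesUpToSign g N) :
    ∃ Q : MvPolynomial (Fin 4) ℂ, Q ≠ 0 ∧ Q.IsHomogeneous 2 ∧
      (∃ χ : G →* ℂˣ, ∀ (g : G) (f : MvPolynomial (Fin 2) ℂ), f.IsHomogeneous 3 →
        MvPolynomial.eval
            (cubicCoords (cubicAct ((g : SpecialLinearGroup (Fin 2) ℂ))⁻¹ f)) Q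
          = (χ g : ℂ) * MvPolynomial.eval (cubicCoords f) Q) ∧
      (∀ v : Fin 4 → ℂ,
        (∀ w : Fin 4 → ℂ,
          MvPolynomial.eval (v + w) Q = MvPolynomial.eval v Q + MvPolynomial.eval w Q) →
        v = 0) := by
  let q := frameForm fun k => (N k : Matrix (Fin 2) (Fin 2) ℂ)
  obtain ⟨Q, hQhom, hQ⟩ := exists_isHomogeneous_two_eval_eq (q.comp cubicTensor.toLinearMap)
  replace hQ (v) : eval v Q = q (cubicTensor v) := hQ v
  have hnondeg (v : Fin 4 → ℂ) (hv : ∀ w, eval (v + w) Q = eval v Q + eval w Q) : v = 0 := by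
    refine cubicTensor.map_eq_zero_iff.1 <| hN.coe_matrix.separatingLeft_frameForm _ fun s => ?_
    obtain ⟨w, rfl⟩ := cubicTensor.surjective s
    simpa [QuadraticMap.polar, hQ, sub_sub, sub_eq_zero] using hv w
  have hne : ∃ t, q t ≠ 0 := by
    by_contra! h
    exact one_ne_zero (congrFun (hnondeg 1 fun w => by simp [hQ, h]) 0)
  obtain ⟨χ, hχ⟩ := exists_monoidHom_of_semiinvariant (G := G)
    (act := fun g => symPow (g : Matrix (Fin 2) (Fin 2) ℂ))
    (fun g h => by simp [symPow_mul_apply]) hne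
    fun g => (hG g g.2).coe_matrix.exists_frameForm_symPow (by simp)
  refine ⟨Q, ?_, hQhom, ⟨χ, fun g f hf => ?_⟩, hnondeg⟩
  · rintro rfl
    obtain ⟨t, ht⟩ := hne
    exact ht (by simpa using (hQ (cubicTensor.symm t)).symm)
  · rw [hQ, hQ, cubicTensor_cubicCoords_cubicAct_inv _ hf, hχ]

/-- For a binary tetrahedral or binary octahedral group `G ≤ SL(2, ℂ)`
(so `G/{±1} ≅ A₄` or `G/{±1} ≅ S₄`), the induced 4-dimensional representation on `Sym³(ℂ²)`
has a nonzero nondegenerate semi-invariant quadratic form; i.e. the induced projective action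
on `ℙ³` leaves a smooth quadric surface invariant. -/
theorem stmt_7 (G : Subgroup (SpecialLinearGroup (Fin 2) ℂ)) (hGfin : Finite G)
    (hA4S4 : (∃ φ : G →* alternatingGroup (Fin 4), Function.Surjective φ ∧
        ∀ g : G, φ g = 1 ↔ ((g : SpecialLinearGroup (Fin 2) ℂ) = 1 ∨
          (g : SpecialLinearGroup (Fin 2) ℂ) = -1)) ∨
      (∃ φ : G →* Equiv.Perm (Fin 4), Function.Surjective φ ∧
        ∀ g : G, φ g = 1 ↔ ((g : SpecialLinearGroup (Fin 2) ℂ) = 1 ∨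
          (g : SpecialLinearGroup (Fin 2) ℂ) = -1))) :
    ∃ Q : MvPolynomial (Fin 4) ℂ, Q ≠ 0 ∧ Q.IsHomogeneous 2 ∧
      (∃ χ : G →* ℂˣ, ∀ (g : G) (f : MvPolynomial (Fin 2) ℂ), f.IsHomogeneous 3 →
        MvPolynomial.eval
            (cubicCoords (cubicAct ((g : SpecialLinearGroup (Fin 2) ℂ))⁻¹ f)) Q
          = (χ g : ℂ) * MvPolynomial.eval (cubicCoords f) Q) ∧
      (∀ v : Fin 4 → ℂ,
        (∀ w : Fin 4 → ℂ,
          MvPolynomial.eval (v + w) Q = MvPolynomial.eval v Q + MvPolynomial.eval w Q) →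
        v = 0) := by
  obtain ⟨ψ, hrange, hker⟩ := exists_hom_perm_alternatingGroup_le_range hA4S4
  obtain ⟨N, hN, hG⟩ :=
    isKleinFrame_doubleTransposition.exists_isQuaternionFrame_permutesUpToSign
      (fun _ => specialLinearGroup_two_eq_one_or_eq_neg_one) hker
      (fun k => hrange (doubleTransposition_mem_alternatingGroup k))
      exists_perm_mul_doubleTransposition
  exact stmt_7_general G hN hG
end
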